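/- arXiv:1908.00567 — 2 statements merged into one kernel-verified Lean document; each statement's English description precedes it below -/
import Mathlib

section
/- Let Q be a finite acyclic quiver and 𝒬• = (Q¹,…,Q^ℓ) an admissible, ordered, Dynkin subquiver partition such that every positive root of every part Q^j has some coordinate equal to 1 (excluding E₈ parts). For a dimension vector γ^j supported on Q^j₀, the space ℋ_{γ^j} of Q coincides with the corresponding graded piece of ℋ(Q^j) (polynomials in the variables at the vertices of Q^j). Then the ℚ-linear map ⊕_{(γ¹,…,γ^ℓ)} (ℋ_{γ¹} ⊗ ⋯ ⊗ ℋ_{γ^ℓ}) → ℋ(Q), where the sum is over all tuples of dimension vectors with γ^j supported on Q^j₀ and which sends g₁ ⊗ ⋯ ⊗ g_ℓ to the left-to-right product g₁ * ⋯ * g_ℓ in ℋ(Q), is bijective; moreover, for classes supported on a single part Q^j the product of ℋ(Q) agrees with the CoHA product of the quiver Q^j, so this map is an algebra isomorphism ℋ(Q¹) ⊗ ⋯ ⊗ ℋ(Q^ℓ) ≅ ℋ(Q). -/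
open MvPolynomial
open scoped Classical

/-- A finite quiver with vertex set `Fin n`: a finite type of arrows together with
head and tail maps. -/
structure FinQuiver (n : ℕ) where
  Arr : Type
  [fintypeArr : Fintype Arr]
  hd : Arr → Fin n
  tl : Arr → Fin n

attribute [instance] FinQuiver.fintypeArr

variable {n : ℕ}

/-- `Q` is acyclic: there is no oriented cycle, i.e. no path
`a₁, …, a_{k+1}` (with `hd aₘ = tl aₘ₊₁`) whose final head equals its initial tail. -/
def FinQuiver.Acyclic (Q : FinQuiver n) : Prop :=
  ∀ (k : ℕ) (c : Fin (k + 1) → Q.Arr),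
    (∀ m : Fin k, Q.hd (c m.castSucc) = Q.tl (c m.succ)) →
    Q.hd (c (Fin.last k)) ≠ Q.tl (c 0)

/-- The Euler form `χ_Q` of the quiver `Q`. -/
def FinQuiver.euler (Q : FinQuiver n) (α β : Fin n → ℕ) : ℤ :=
  ∑ i : Fin n, (α i : ℤ) * β i - ∑ a : Q.Arr, (α (Q.tl a) : ℤ) * β (Q.hd a)

/-- The opposite antisymmetrization `⟨α,β⟩ = χ_Q(β,α) − χ_Q(α,β)`. -/
def FinQuiver.lam (Q : FinQuiver n) (α β : Fin n → ℕ) : ℤ :=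
  Q.euler β α - Q.euler α β

/-- The polynomial ring in the variables `ω_{i,j}`, `i ∈ Q₀`, `j ∈ ℕ` (0-indexed). -/
abbrev PolyQ (n : ℕ) := MvPolynomial (Fin n × ℕ) ℚ

/-- The permutation of the variables at vertex `i` induced by a permutation of `ℕ`. -/
def vertexPerm (i : Fin n) (σ : Equiv.Perm ℕ) : Fin n × ℕ → Fin n × ℕ :=
  fun p => if p.1 = i then (i, σ p.2) else p

/-- `f` is, for each vertex `i`, symmetric in the variables `ω_{i,0},…,ω_{i,γ i − 1}`. -/
def SymmIn (γ : Fin n → ℕ) (f : PolyQ n) : Prop :=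
  ∀ (i : Fin n) (σ : Equiv.Perm ℕ),
    (∀ j : ℕ, σ j ≠ j → j < γ i) → rename (vertexPerm i σ) f = f

lemma vars_smul_subset (c : ℚ) (f : PolyQ n) : (c • f).vars ⊆ f.vars := by
  rw [MvPolynomial.smul_eq_C_mul]
  refine (MvPolynomial.vars_mul _ _).trans ?_
  simp [MvPolynomial.vars_C]

/-- `ℋ_γ`: polynomials using only the variables `ω_{i,j}`, `j < γ i`, which are
symmetric at each vertex.  A `ℚ`-submodule of `PolyQ n`. -/
noncomputable def Hspace (γ : Fin n → ℕ) : Submodule ℚ (PolyQ n) where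
  carrier := {f | (∀ p ∈ f.vars, p.2 < γ p.1) ∧ SymmIn γ f}
  add_mem' := by
    rintro f g ⟨hf1, hf2⟩ ⟨hg1, hg2⟩
    refine ⟨fun p hp => ?_, fun i σ hσ => ?_⟩
    · rcases Finset.mem_union.mp (MvPolynomial.vars_add_subset f g hp) with h | h
      exacts [hf1 p h, hg1 p h]
    · rw [map_add, hf2 i σ hσ, hg2 i σ hσ]
  zero_mem' := by
    refine ⟨fun p hp => ?_, fun i σ hσ => map_zero _⟩
    simp [MvPolynomial.vars_0] at hp
  smul_mem' := by
    rintro c f ⟨hf1, hf2⟩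
    refine ⟨fun p hp => hf1 p (vars_smul_subset c f hp), fun i σ hσ => ?_⟩
    rw [map_smul, hf2 i σ hσ]

/-- Polynomials all of whose variables sit at vertex `i`. -/
noncomputable def onlyVertex (i : Fin n) : Submodule ℚ (PolyQ n) where
  carrier := {f | ∀ p ∈ f.vars, p.1 = i}
  add_mem' := by
    intro f g hf hg p hp
    rcases Finset.mem_union.mp (MvPolynomial.vars_add_subset f g hp) with h | h
    exacts [hf p h, hg p h]
  zero_mem' := by
    intro p hp
    simp [MvPolynomial.vars_0] at hp
  smul_mem' := by
    intro c f hf p hp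
    exact hf p (vars_smul_subset c f hp)

/-- `𝒜_{β,m}`: the subspace of `ℋ_{m·β}` of polynomials depending only on the
variables `ω_{i,0},…,ω_{i,m−1}` at the distinguished vertex `i`. -/
noncomputable def Aspace (β : Fin n → ℕ) (i : Fin n) (m : ℕ) : Submodule ℚ (PolyQ n) :=
  Hspace (fun v => m * β v) ⊓ onlyVertex i

/-- Substitute for the `j`-th variable at vertex `i` the variable `ω_{i,s}` where `s`
is the `j`-th element of `T i` in increasing order. -/
noncomputable def substAlong (T : Fin n → Finset ℕ) : PolyQ n →ₐ[ℚ] PolyQ n :=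
  aeval fun p : Fin n × ℕ => X (p.1, ((T p.1).sort (· ≤ ·)).getD p.2 0)

/-- The index set of the Kontsevich–Soibelman localization sum:
for each vertex, a `γ₁ i`-element subset of `{0,…,γ₁ i + γ₂ i − 1}`. -/
def shuffles (γ₁ γ₂ : Fin n → ℕ) : Finset (Fin n → Finset ℕ) :=
  Fintype.piFinset fun i => (Finset.range (γ₁ i + γ₂ i)).powerset.filter fun s => s.card = γ₁ i

def shuffleCompl (γ₁ γ₂ : Fin n → ℕ) (S : Fin n → Finset ℕ) : Fin n → Finset ℕ :=
  fun i => Finset.range (γ₁ i + γ₂ i) \ S i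

/-- The numerator factor attached to the arrow `a`:
`∏_{j' ∈ S̄_{h a}} ∏_{j ∈ S_{t a}} (ω_{h a, j'} − ω_{t a, j})`. -/
noncomputable def arrowFactor (Q : FinQuiver n) (γ₁ γ₂ : Fin n → ℕ)
    (S : Fin n → Finset ℕ) (a : Q.Arr) : PolyQ n :=
  ∏ j' ∈ shuffleCompl γ₁ γ₂ S (Q.hd a), ∏ j ∈ S (Q.tl a),
    (X (Q.hd a, j') - X (Q.tl a, j))

noncomputable def interactionNum (Q : FinQuiver n) (γ₁ γ₂ : Fin n → ℕ)
    (S : Fin n → Finset ℕ) : PolyQ n :=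
  ∏ a : Q.Arr, arrowFactor Q γ₁ γ₂ S a

noncomputable def interactionDen (γ₁ γ₂ : Fin n → ℕ) (S : Fin n → Finset ℕ) : PolyQ n :=
  ∏ i : Fin n, ∏ j' ∈ shuffleCompl γ₁ γ₂ S i, ∏ j ∈ S i, (X (i, j') - X (i, j))

/-- The Kontsevich–Soibelman localization sum, an element of the field of rational
functions (the fraction field of `PolyQ n`). -/
noncomputable def cohaMulRat (Q : FinQuiver n) (γ₁ γ₂ : Fin n → ℕ) (f₁ f₂ : PolyQ n) :
    FractionRing (PolyQ n) :=
  ∑ S ∈ shuffles γ₁ γ₂,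
    algebraMap (PolyQ n) (FractionRing (PolyQ n))
        (substAlong S f₁ * substAlong (shuffleCompl γ₁ γ₂ S) f₂ * interactionNum Q γ₁ γ₂ S) /
      algebraMap (PolyQ n) (FractionRing (PolyQ n)) (interactionDen γ₁ γ₂ S)

/-- The CoHA product `f₁ * f₂`: the unique polynomial representing the localization
sum (and `0` if the sum were not a polynomial, which never happens). -/
noncomputable def cohaMul (Q : FinQuiver n) (γ₁ γ₂ : Fin n → ℕ) (f₁ f₂ : PolyQ n) : PolyQ n :=
  if h : ∃ P : PolyQ n,
      algebraMap (PolyQ n) (FractionRing (PolyQ n)) P = cohaMulRat Q γ₁ γ₂ f₁ f₂ then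
    h.choose
  else 0

/-- Iterated, left-to-right, CoHA product of a list of dimension-vector/polynomial pairs.
Returns the total dimension vector together with the product. -/
noncomputable def cohaProd (Q : FinQuiver n) :
    List ((Fin n → ℕ) × PolyQ n) → (Fin n → ℕ) × PolyQ n
  | [] => (fun _ => 0, 1)
  | x :: xs => xs.foldl (fun acc y => (acc.1 + y.1, cohaMul Q acc.1 y.1 acc.2 y.2)) x

/-- Left-to-right CoHA product `f 0 * f 1 * ⋯ * f (r−1)` with `f u ∈ ℋ_{γ u}`. -/
noncomputable def cohaProdFin (Q : FinQuiver n) {r : ℕ} (γ : Fin r → Fin n → ℕ)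
    (f : Fin r → PolyQ n) : PolyQ n :=
  (cohaProd Q (List.ofFn fun u => (γ u, f u))).2

/-- The quiver with one vertex and no arrows. -/
def A1 : FinQuiver 1 := { Arr := Empty, hd := Empty.elim, tl := Empty.elim }

/-- `ψ_p = x₁ ^ p ∈ ℋ₁(A₁)`. -/
noncomputable def psi (p : ℕ) : PolyQ 1 := X ((0 : Fin 1), 0) ^ p

def oneDim : Fin 1 → ℕ := fun _ => 1

/-- The simple dimension vector `e_i`. -/
def simpleDim (i : Fin n) : Fin n → ℕ := fun v => if v = i then 1 else 0

/-- A subquiver of `Q`. -/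
structure Subquiver (Q : FinQuiver n) where
  verts : Finset (Fin n)
  arrows : Finset Q.Arr
  hd_mem : ∀ a ∈ arrows, Q.hd a ∈ verts
  tl_mem : ∀ a ∈ arrows, Q.tl a ∈ verts

def Subquiver.Full {Q : FinQuiver n} (Q' : Subquiver Q) : Prop :=
  ∀ a : Q.Arr, Q.hd a ∈ Q'.verts → Q.tl a ∈ Q'.verts → a ∈ Q'.arrows

/-- Adjacency in the underlying undirected graph of a subquiver. -/
def Subquiver.Adj {Q : FinQuiver n} (Q' : Subquiver Q) (x y : Fin n) : Prop :=
  ∃ a ∈ Q'.arrows, (Q.hd a = x ∧ Q.tl a = y) ∨ (Q.hd a = y ∧ Q.tl a = x)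

def Subquiver.Connected {Q : FinQuiver n} (Q' : Subquiver Q) : Prop :=
  ∀ x ∈ Q'.verts, ∀ y ∈ Q'.verts, Relation.ReflTransGen Q'.Adj x y

/-- The Euler form of the subquiver `Q'` (on `ℤ`-valued vectors). -/
def Subquiver.eulerZ {Q : FinQuiver n} (Q' : Subquiver Q) (α β : Fin n → ℤ) : ℤ :=
  ∑ i ∈ Q'.verts, α i * β i - ∑ a ∈ Q'.arrows, α (Q.tl a) * β (Q.hd a)

/-- Positive definiteness of the Tits form of `Q'` on vectors supported on `Q'`. -/
def Subquiver.PosDefTits {Q : FinQuiver n} (Q' : Subquiver Q) : Prop :=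
  ∀ β : Fin n → ℤ, (∀ i, i ∉ Q'.verts → β i = 0) → β ≠ 0 → 0 < Q'.eulerZ β β

/-- A connected full subquiver with positive definite Tits form. -/
def Subquiver.IsDynkin {Q : FinQuiver n} (Q' : Subquiver Q) : Prop :=
  Q'.Connected ∧ Q'.Full ∧ Q'.PosDefTits

/-- A positive root of `Q'`: a nonzero dimension vector supported on `Q'` with
Tits form equal to `1`. -/
def Subquiver.IsPosRoot {Q : FinQuiver n} (Q' : Subquiver Q) (β : Fin n → ℕ) : Prop :=
  (∀ i, i ∉ Q'.verts → β i = 0) ∧ β ≠ 0 ∧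
    Q'.eulerZ (fun i => (β i : ℤ)) (fun i => (β i : ℤ)) = 1

/-- A subquiver regarded as a quiver in its own right (on the ambient vertex set). -/
def Subquiver.toQuiver {Q : FinQuiver n} (Q' : Subquiver Q) : FinQuiver n :=
  { Arr := {a : Q.Arr // a ∈ Q'.arrows}, hd := fun a => Q.hd a.1, tl := fun a => Q.tl a.1 }

/-- An (ordered list) subquiver partition `𝒬• = (Q¹,…,Q^ℓ)`: nonempty connected
subquivers whose vertex sets partition `Q₀`. -/
structure SubqPartition (Q : FinQuiver n) (ℓ : ℕ) where
  part : Fin ℓ → Subquiver Q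
  nonempty' : ∀ j, (part j).verts.Nonempty
  connected' : ∀ j, (part j).Connected
  cover : ∀ i : Fin n, ∃! j, i ∈ (part j).verts

/-- The set `𝒬•₁` of arrows belonging to one of the parts. -/
noncomputable def SubqPartition.arrs {Q : FinQuiver n} {ℓ : ℕ} (P : SubqPartition Q ℓ) : Finset Q.Arr :=
  Finset.univ.biUnion fun j => (P.part j).arrows

/-- The partition is admissible and ordered: every arrow not inside a part goes from a
later part to an earlier part (head before tail). -/
def SubqPartition.Ordered {Q : FinQuiver n} {ℓ : ℕ} (P : SubqPartition Q ℓ) : Prop :=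
  ∀ a : Q.Arr, a ∉ P.arrs → ∀ i j : Fin ℓ,
    Q.hd a ∈ (P.part i).verts → Q.tl a ∈ (P.part j).verts → i < j

/-- Every part is a Dynkin subquiver. -/
def SubqPartition.Dynkin {Q : FinQuiver n} {ℓ : ℕ} (P : SubqPartition Q ℓ) : Prop :=
  ∀ j, (P.part j).IsDynkin

/-- `β : Fin r → (Fin n → ℕ)` is a Reineke-ordered enumeration of `Φ₊(𝒬•)`, with
`blk u` the part to which `β u` belongs: block-monotone, enumerating all positive roots
without repetition, and within each block `u < v → ⟨β u, β v⟩ ≥ 0`. -/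
def IsReinekeOrder {Q : FinQuiver n} {ℓ : ℕ} (P : SubqPartition Q ℓ) {r : ℕ}
    (β : Fin r → Fin n → ℕ) (blk : Fin r → Fin ℓ) : Prop :=
  Monotone blk ∧
  (∀ u, (P.part (blk u)).IsPosRoot (β u)) ∧
  Function.Injective β ∧
  (∀ j (b : Fin n → ℕ), (P.part j).IsPosRoot b → ∃ u, β u = b) ∧
  (∀ u v : Fin r, u < v → blk u = blk v → 0 ≤ Q.lam (β u) (β v))

open scoped TensorProduct DirectSum

section aux

lemma aux_functional {σ : Type} {ℓ : ℕ} (cl : σ → Fin ℓ) (φ : Fin ℓ → (MvPolynomial σ ℚ →ₗ[ℚ] ℚ)) :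
    ∃ F : MvPolynomial σ ℚ →ₗ[ℚ] ℚ, ∀ f : Fin ℓ → MvPolynomial σ ℚ,
      (∀ j, ∀ p ∈ (f j).vars, cl p = j) → F (∏ j, f j) = ∏ j, φ j (f j) := by
  refine ⟨(basisMonomials σ ℚ).constr ℚ (fun m => ∏ j, φ j (monomial (m.filter (fun p => cl p = j)) 1)), ?_⟩
  intro f hf
  have hF : ∀ m : σ →₀ ℕ, (basisMonomials σ ℚ).constr ℚ
      (fun m => ∏ j, φ j (monomial (m.filter (fun p => cl p = j)) 1)) (monomial m 1)
      = ∏ j, φ j (monomial (m.filter (fun p => cl p = j)) 1) := by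
    intro m
    have := (basisMonomials σ ℚ).constr_basis ℚ
      (fun m => ∏ j, φ j (monomial (m.filter (fun p => cl p = j)) 1)) m
    simpa using this
  generalize (basisMonomials σ ℚ).constr ℚ
      (fun m => ∏ j, φ j (monomial (m.filter (fun p => cl p = j)) 1)) = F at hF
  have hexp : ∀ j, f j = ∑ m ∈ (f j).support, (coeff m (f j)) • monomial m (1 : ℚ) := by
    intro j
    conv_lhs => rw [(f j).as_sum]
    refine Finset.sum_congr rfl fun m _ => ?_
    rw [smul_monomial]; simp
  have h1 : ∏ j, f j = ∑ x ∈ Fintype.piFinset (fun j => (f j).support),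
      ∏ j, (coeff (x j) (f j)) • monomial (x j) (1 : ℚ) := by
    rw [← Finset.prod_univ_sum (fun j => (f j).support)
      (fun j m => (coeff m (f j)) • monomial m (1 : ℚ))]
    exact Finset.prod_congr rfl fun j _ => hexp j
  have h2 : ∏ j, φ j (f j) = ∑ x ∈ Fintype.piFinset (fun j => (f j).support),
      ∏ j, (coeff (x j) (f j)) * φ j (monomial (x j) (1 : ℚ)) := by
    rw [← Finset.prod_univ_sum (fun j => (f j).support)
      (fun j m => (coeff m (f j)) * φ j (monomial m (1 : ℚ)))]
    refine Finset.prod_congr rfl fun j _ => ?_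
    conv_lhs => rw [hexp j]
    rw [map_sum]
    simp only [map_smul, smul_eq_mul]
  rw [h1, h2, map_sum]
  refine Finset.sum_congr rfl fun x hx => ?_
  rw [Fintype.mem_piFinset] at hx
  have hprod : ∏ j, (coeff (x j) (f j)) • monomial (x j) (1 : ℚ)
      = (∏ j, coeff (x j) (f j)) • monomial (∑ j, x j) (1 : ℚ) := by
    rw [monomial_sum_one, Finset.prod_smul]
  rw [hprod, map_smul, hF, smul_eq_mul, Finset.prod_mul_distrib]
  congr 1
  refine Finset.prod_congr rfl fun j _ => ?_
  have hm : Finsupp.filter (fun p => cl p = j) (∑ j, x j) = x j := ?_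
  · rw [hm]
  ext p
  rw [Finsupp.filter_apply]
  have hx0 : ∀ k, cl p ≠ k → x k p = 0 := by
    intro k hk
    by_contra h
    exact hk (hf k p ((mem_vars_iff_mem_support p).mpr ⟨x k, hx k, Finsupp.mem_support_iff.mpr h⟩))
  split_ifs with h
  · rw [Finsupp.finsetSum_apply, Finset.sum_eq_single j]
    · intro k _ hk
      exact hx0 k (by rw [h]; exact hk.symm)
    · simp
  · exact (hx0 j h).symm

lemma aux_rename_congr {σ : Type} {u v : σ → σ} (f : MvPolynomial σ ℚ)
    (h : ∀ p ∈ f.vars, u p = v p) : rename u f = rename v f := by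
  refine hom_congr_vars (f₁ := (rename u : _ →ₐ[ℚ] _).toRingHom)
    (f₂ := (rename v : _ →ₐ[ℚ] _).toRingHom) ?_ ?_ rfl
  · ext; simp
  · intro i hi _
    simp [h i hi]

lemma aux_rename_id {σ : Type} {u : σ → σ} (f : MvPolynomial σ ℚ)
    (h : ∀ p ∈ f.vars, u p = p) : rename u f = f := by
  rw [aux_rename_congr (v := id) f h, rename_id_apply]

lemma aux_subst (T : Fin n → Finset ℕ) (γ : Fin n → ℕ) (f : PolyQ n)
    (hf : ∀ p ∈ f.vars, p.2 < γ p.1) (hT : ∀ i, γ i ≠ 0 → T i = Finset.range (γ i)) :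
    substAlong T f = f := by
  refine hom_congr_vars (f₁ := (substAlong T).toRingHom)
    (f₂ := RingHom.id _) ?_ ?_ rfl
  · ext; simp
  · intro p hp _
    have h := hf p hp
    simp [substAlong]
    rw [hT p.1 (by omega), Finset.sort_range, List.getElem?_range h]
    rfl

/-- the two dimension vectors do not interact -/
def auxGood (Q : FinQuiver n) (γ₁ γ₂ : Fin n → ℕ) : Prop :=
  (∀ i, γ₁ i = 0 ∨ γ₂ i = 0) ∧ ∀ a : Q.Arr, γ₂ (Q.hd a) = 0 ∨ γ₁ (Q.tl a) = 0

lemma aux_mul (Q : FinQuiver n) (γ₁ γ₂ : Fin n → ℕ) (h : auxGood Q γ₁ γ₂) (f₁ f₂ : PolyQ n)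
    (h₁ : ∀ p ∈ f₁.vars, p.2 < γ₁ p.1) (h₂ : ∀ p ∈ f₂.vars, p.2 < γ₂ p.1) :
    cohaMul Q γ₁ γ₂ f₁ f₂ = f₁ * f₂ := by
  obtain ⟨hg, ha⟩ := h
  set S : Fin n → Finset ℕ := fun i => Finset.range (γ₁ i) with hS
  have hsh : shuffles γ₁ γ₂ = {S} := by
    ext T
    simp only [shuffles, Fintype.mem_piFinset, Finset.mem_filter, Finset.mem_powerset,
      Finset.mem_singleton]
    constructor
    · intro hT
      funext i
      obtain ⟨h1, h2⟩ := hT i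
      rcases hg i with h | h
      · rw [h] at h2
        simp [hS, h, Finset.card_eq_zero.mp h2]
      · rw [h, add_zero] at h1
        exact Finset.eq_of_subset_of_card_le h1 (by simp [h2, hS])
    · rintro rfl i
      exact ⟨Finset.range_subset_range.mpr (by omega), by simp [hS]⟩
  have hc : ∀ i, γ₂ i = 0 → shuffleCompl γ₁ γ₂ S i = ∅ := by
    intro i hi; simp [shuffleCompl, hS, hi]
  have hc' : ∀ i, γ₂ i ≠ 0 → shuffleCompl γ₁ γ₂ S i = Finset.range (γ₂ i) := by
    intro i hi
    have := (hg i).resolve_right hi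
    simp [shuffleCompl, hS, this]
  have hs0 : ∀ i, γ₁ i = 0 → S i = ∅ := by
    intro i hi; simp [hS, hi]
  have hnum : interactionNum Q γ₁ γ₂ S = 1 := by
    refine Finset.prod_eq_one fun a _ => ?_
    unfold arrowFactor
    rcases ha a with h | h
    · rw [hc _ h]; simp
    · rw [hs0 _ h]; simp
  have hden : interactionDen γ₁ γ₂ S = 1 := by
    refine Finset.prod_eq_one fun i _ => ?_
    rcases hg i with h | h
    · rw [hs0 _ h]; simp
    · rw [hc _ h]; simp
  have hrat : algebraMap (PolyQ n) (FractionRing (PolyQ n)) (f₁ * f₂)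
      = cohaMulRat Q γ₁ γ₂ f₁ f₂ := by
    unfold cohaMulRat
    rw [hsh, Finset.sum_singleton, hnum, hden, aux_subst S γ₁ f₁ h₁ (fun i _ => rfl),
      aux_subst _ γ₂ f₂ h₂ hc']
    simp
  have hex : ∃ P : PolyQ n,
      algebraMap (PolyQ n) (FractionRing (PolyQ n)) P = cohaMulRat Q γ₁ γ₂ f₁ f₂ := ⟨_, hrat⟩
  unfold cohaMul
  rw [dif_pos hex]
  exact IsFractionRing.injective (PolyQ n) (FractionRing (PolyQ n))
    (hex.choose_spec.trans hrat.symm)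

lemma aux_foldl (Q : FinQuiver n) (xs : List ((Fin n → ℕ) × PolyQ n)) :
    ∀ acc : (Fin n → ℕ) × PolyQ n,
      (∀ p ∈ acc.2.vars, p.2 < acc.1 p.1) →
      (∀ y ∈ xs, ∀ p ∈ y.2.vars, p.2 < y.1 p.1) →
      (∀ y ∈ xs, auxGood Q acc.1 y.1) →
      xs.Pairwise (fun x y => auxGood Q x.1 y.1) →
      (xs.foldl (fun acc y => (acc.1 + y.1, cohaMul Q acc.1 y.1 acc.2 y.2)) acc).2
        = acc.2 * (xs.map Prod.snd).prod := by
  induction xs with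
  | nil => intro acc _ _ _ _; simp
  | cons y ys ih =>
    intro acc h1 h2 h3 h4
    rw [List.pairwise_cons] at h4
    have hm := aux_mul Q acc.1 y.1 (h3 y (by simp)) acc.2 y.2 h1 (h2 y (by simp))
    rw [List.foldl_cons, ih, hm]
    · simp [mul_assoc]
    · intro p hp
      simp only [hm] at hp
      rcases Finset.mem_union.mp (vars_mul _ _ hp) with h | h
      · have := h1 p h
        simp only [Pi.add_apply]; omega
      · have := h2 y (by simp) p h
        simp only [Pi.add_apply]; omega
    · intro z hz; exact h2 z (by simp [hz])
    · intro z hz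
      have ha := h3 z (by simp [hz])
      have hb := h4.1 z hz
      refine ⟨fun i => ?_, fun a => ?_⟩
      · have := ha.1 i; have := hb.1 i
        simp only [Pi.add_apply]; omega
      · have := ha.2 a; have := hb.2 a
        simp only [Pi.add_apply]; omega
    · exact h4.2

lemma aux_prodFin (Q : FinQuiver n) {r : ℕ} (γ : Fin r → Fin n → ℕ) (f : Fin r → PolyQ n)
    (hf : ∀ j, ∀ p ∈ (f j).vars, p.2 < γ j p.1)
    (hg : ∀ i j, i < j → auxGood Q (γ i) (γ j)) :
    cohaProdFin Q γ f = ∏ j, f j := by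
  have hpw : (List.ofFn fun u => (γ u, f u)).Pairwise (fun x y => auxGood Q x.1 y.1) := by
    rw [List.pairwise_ofFn]; intro i j h; exact hg i j h
  have hv : ∀ y ∈ (List.ofFn fun u => (γ u, f u)), ∀ p ∈ y.2.vars, p.2 < y.1 p.1 := by
    intro y hy
    rw [List.mem_ofFn] at hy
    obtain ⟨u, rfl⟩ := hy
    exact hf u
  have hpr : ((List.ofFn fun u => (γ u, f u)).map Prod.snd).prod = ∏ j, f j := by
    rw [List.map_ofFn, List.prod_ofFn]; rfl
  rw [← hpr]
  unfold cohaProdFin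
  generalize (List.ofFn fun u => (γ u, f u)) = l at *
  cases l with
  | nil => simp [cohaProd]
  | cons x xs =>
    rw [List.pairwise_cons] at hpw
    rw [cohaProd, aux_foldl Q xs x (hv x (by simp)) (fun y hy => hv y (by simp [hy])) hpw.1 hpw.2]
    simp

lemma aux_partA (Q : FinQuiver n) (Q' : Subquiver Q) (hfull : Q'.Full) (γ₁ γ₂ : Fin n → ℕ)
    (h₁ : ∀ i, i ∉ Q'.verts → γ₁ i = 0) (h₂ : ∀ i, i ∉ Q'.verts → γ₂ i = 0) (g₁ g₂ : PolyQ n) :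
    cohaMul Q γ₁ γ₂ g₁ g₂ = cohaMul Q'.toQuiver γ₁ γ₂ g₁ g₂ := by
  have hr : cohaMulRat Q γ₁ γ₂ g₁ g₂ = cohaMulRat Q'.toQuiver γ₁ γ₂ g₁ g₂ := by
    unfold cohaMulRat
    refine Finset.sum_congr rfl fun S hS => ?_
    simp only [shuffles, Fintype.mem_piFinset, Finset.mem_filter, Finset.mem_powerset] at hS
    have hnum : interactionNum Q γ₁ γ₂ S = interactionNum Q'.toQuiver γ₁ γ₂ S := by
      unfold interactionNum
      have e1 : ∏ a, arrowFactor Q γ₁ γ₂ S a = ∏ a ∈ Q'.arrows, arrowFactor Q γ₁ γ₂ S a := by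
        symm
        refine Finset.prod_subset (Finset.subset_univ _) fun a _ ha => ?_
        unfold arrowFactor
        by_cases hh : Q.hd a ∈ Q'.verts
        · have ht : Q.tl a ∉ Q'.verts := fun ht => ha (hfull a hh ht)
          have := (hS (Q.tl a)).2
          rw [h₁ _ ht] at this
          rw [Finset.card_eq_zero.mp this]; simp
        · have : shuffleCompl γ₁ γ₂ S (Q.hd a) = ∅ := by
            simp [shuffleCompl, h₁ _ hh, h₂ _ hh]
          rw [this]; simp
      rw [e1, ← Finset.prod_coe_sort]
      refine Fintype.prod_equiv (Equiv.refl _) _ _ fun a => ?_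
      rfl
    rw [hnum]
  unfold cohaMul
  rw [hr]

/-- product symmetric group -/
abbrev auxG (γ : Fin n → ℕ) : Type := ∀ i : Fin n, Equiv.Perm {x : ℕ // x ∈ Finset.range (γ i)}

noncomputable def auxAct (γ : Fin n → ℕ) (g : auxG γ) (p : Fin n × ℕ) : Fin n × ℕ :=
  (p.1, Equiv.Perm.ofSubtype (g p.1) p.2)

lemma auxAct_lt (γ : Fin n → ℕ) (g : auxG γ) (p : Fin n × ℕ) (h : p.2 < γ p.1) :
    (auxAct γ g p).2 < γ p.1 := by
  have := (Equiv.Perm.ofSubtype_apply_mem_iff_mem (g p.1) p.2).mpr (Finset.mem_range.mpr h)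
  exact Finset.mem_range.mp this

lemma auxAct_fix (γ : Fin n → ℕ) (g : auxG γ) (f : PolyQ n) (hf : SymmIn γ f) :
    rename (auxAct γ g) f = f := by
  have key : ∀ s : Finset (Fin n),
      rename (fun p => if p.1 ∈ s then auxAct γ g p else p) f = f := by
    intro s
    induction s using Finset.induction_on with
    | empty => exact aux_rename_id f (by simp)
    | insert i s hi ih =>
      have hfix := hf i (Equiv.Perm.ofSubtype (g i)) (by
        intro j hj
        by_contra h
        exact hj (Equiv.Perm.ofSubtype_apply_of_not_mem _ (by simpa using h)))
      conv_rhs => rw [← hfix, ← ih]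
      rw [rename_rename]
      congr 2
      funext p
      obtain ⟨k, x⟩ := p
      simp only [Function.comp, vertexPerm, auxAct, Finset.mem_insert]
      by_cases hk : k = i
      · subst hk; simp [hi]
      · by_cases hs : k ∈ s <;> simp [hk, hs]
  have := key Finset.univ
  simpa using this

noncomputable def auxR (γ : Fin n → ℕ) (f : PolyQ n) : PolyQ n :=
  ∑ g : auxG γ, rename (auxAct γ g) f

lemma auxR_mem (γ δ : Fin n → ℕ) (hδ : ∀ i, δ i = 0 ∨ δ i = γ i) (f : PolyQ n)
    (hf : ∀ p ∈ f.vars, p.2 < δ p.1) : auxR γ f ∈ Hspace δ := by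
  constructor
  · have : auxR γ f ∈ supported ℚ {p : Fin n × ℕ | p.2 < δ p.1} := by
      refine Subalgebra.sum_mem _ fun g _ => ?_
      rw [mem_supported]
      intro p hp
      have := vars_rename _ _ (Finset.mem_coe.mp hp)
      rw [Finset.mem_image] at this
      obtain ⟨q, hq, rfl⟩ := this
      have h1 := hf q hq
      have h2 : δ q.1 = γ q.1 := (hδ q.1).resolve_left (by omega)
      have := auxAct_lt γ g q (by omega)
      show (auxAct γ g q).2 < δ q.1
      omega
    rw [mem_supported] at this
    exact fun p hp => this hp
  · intro i σ hσ
    have hσ' : ∀ j, σ j ≠ j → j ∈ Finset.range (γ i) := by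
      intro j hj
      have := hσ j hj
      have := hδ i
      rw [Finset.mem_range]; omega
    have hiff : ∀ x, σ x ∈ Finset.range (γ i) ↔ x ∈ Finset.range (γ i) := by
      intro x
      by_cases hx : σ x = x
      · rw [hx]
      · exact ⟨fun _ => hσ' x hx, fun _ => hσ' _ (fun h => hx (σ.injective h))⟩
    let τ : auxG γ := Pi.mulSingle i (σ.subtypePerm hiff)
    unfold auxR
    rw [map_sum]
    refine Eq.trans ?_ (Equiv.sum_comp (Equiv.mulLeft τ) (fun g => rename (auxAct γ g) f))
    refine Finset.sum_congr rfl fun g _ => ?_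
    rw [rename_rename]
    congr 2
    funext p
    obtain ⟨k, x⟩ := p
    simp only [Function.comp, vertexPerm, auxAct, Equiv.coe_mulLeft, Pi.mul_apply, map_mul,
      Equiv.Perm.mul_apply]
    by_cases hk : k = i
    · subst hk
      simp [τ, Equiv.Perm.ofSubtype_subtypePerm hiff hσ']
    · simp [τ, hk]

end aux

section aux2

lemma aux_tot {ℓ : ℕ} (c : Fin n → Fin ℓ) (gs : Fin ℓ → Fin n → ℕ)
    (hgs : ∀ j i, c i ≠ j → gs j i = 0) (v : Fin n) : ∑ j, gs j v = gs (c v) v := by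
  rw [Finset.sum_eq_single (c v)]
  · intro j _ hj; exact hgs j v hj.symm
  · simp

lemma aux_prod_mem {ℓ : ℕ} (c : Fin n → Fin ℓ) (gs : Fin ℓ → Fin n → ℕ)
    (hgs : ∀ j i, c i ≠ j → gs j i = 0) (g : Fin ℓ → PolyQ n) (hg : ∀ j, g j ∈ Hspace (gs j)) :
    ∏ j, g j ∈ Hspace (fun v => ∑ j, gs j v) := by
  constructor
  · have : ∏ j, g j ∈ supported ℚ {p : Fin n × ℕ | p.2 < ∑ j, gs j p.1} := by
      refine Subalgebra.prod_mem _ fun j _ => ?_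
      rw [mem_supported]
      intro p hp
      have h1 := (hg j).1 p hp
      exact lt_of_lt_of_le h1
        (Finset.single_le_sum (f := fun j => gs j p.1) (fun _ _ => Nat.zero_le _) (Finset.mem_univ j))
    rw [mem_supported] at this
    exact fun p hp => this hp
  · intro i σ hσ
    rw [map_prod]
    refine Finset.prod_congr rfl fun j _ => ?_
    by_cases h : c i = j
    · refine (hg j).2 i σ fun k hk => ?_
      have : k < ∑ j, gs j i := hσ k hk
      rw [aux_tot c gs hgs, h] at this
      exact this
    · refine aux_rename_id _ fun p hp => ?_
      have h1 := (hg j).1 p hp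
      have : p.1 ≠ i := by
        intro hp1
        rw [hp1, hgs j i h] at h1
        omega
      simp [vertexPerm, this]

noncomputable def auxM {ℓ : ℕ} (c : Fin n → Fin ℓ) (gs : Fin ℓ → Fin n → ℕ)
    (hgs : ∀ j i, c i ≠ j → gs j i = 0) :
    MultilinearMap ℚ (fun j : Fin ℓ => ↥(Hspace (gs j))) ↥(Hspace (fun v => ∑ j, gs j v)) :=
  ((MultilinearMap.mkPiAlgebra ℚ (Fin ℓ) (PolyQ n)).compLinearMap
    (fun j => (Hspace (gs j)).subtype)).codRestrict _ (fun g => by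
      simpa using aux_prod_mem c gs hgs (fun j => (g j : PolyQ n)) (fun j => (g j).2))

lemma auxM_coe {ℓ : ℕ} (c : Fin n → Fin ℓ) (gs : Fin ℓ → Fin n → ℕ)
    (hgs : ∀ j i, c i ≠ j → gs j i = 0) (g : ∀ j : Fin ℓ, ↥(Hspace (gs j))) :
    (auxM c gs hgs g : PolyQ n) = ∏ j, (g j : PolyQ n) := by
  simp [auxM]

lemma aux_inj {ℓ : ℕ} (c : Fin n → Fin ℓ) (gs : Fin ℓ → Fin n → ℕ)
    (hgs : ∀ j i, c i ≠ j → gs j i = 0) :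
    Function.Injective (PiTensorProduct.lift (auxM c gs hgs)) := by
  rw [injective_iff_map_eq_zero]
  intro t ht
  let b := fun j : Fin ℓ => Module.Basis.ofVectorSpace ℚ ↥(Hspace (gs j))
  refine (Basis.piTensorProduct b).ext_elem fun k => ?_
  have hex : ∀ j, ∃ φ : PolyQ n →ₗ[ℚ] ℚ, φ ∘ₗ (Hspace (gs j)).subtype = (b j).coord (k j) :=
    fun j => LinearMap.exists_extend _
  choose φ hφ using hex
  obtain ⟨F, hF⟩ := aux_functional (fun p : Fin n × ℕ => c p.1) φ
  have hlin : (F ∘ₗ (Hspace (fun v => ∑ j, gs j v)).subtype) ∘ₗ PiTensorProduct.lift (auxM c gs hgs)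
      = (Basis.piTensorProduct b).coord k := by
    refine PiTensorProduct.ext (MultilinearMap.ext fun g => ?_)
    simp only [LinearMap.compMultilinearMap_apply, LinearMap.comp_apply, PiTensorProduct.lift.tprod,
      Submodule.subtype_apply, auxM_coe, Module.Basis.coord_apply,
      Basis.piTensorProduct_repr_tprod_apply]
    rw [hF]
    · refine Finset.prod_congr rfl fun j _ => ?_
      exact LinearMap.congr_fun (hφ j) (g j)
    · intro j p hp
      by_contra h
      have := (g j).2.1 p hp
      rw [hgs j p.1 h] at this
      omega
  have := LinearMap.congr_fun hlin t
  simp only [LinearMap.comp_apply, ht, map_zero, Module.Basis.coord_apply] at this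
  rw [← this]; simp

lemma aux_surj {ℓ : ℕ} (c : Fin n → Fin ℓ) (gs : Fin ℓ → Fin n → ℕ)
    (hgs : ∀ j i, c i ≠ j → gs j i = 0) :
    Function.Surjective (PiTensorProduct.lift (auxM c gs hgs)) := by
  rintro ⟨f, hfmem⟩
  set γ : Fin n → ℕ := fun v => ∑ j, gs j v with hγ
  have hδ : ∀ j i, gs j i = 0 ∨ gs j i = γ i := by
    intro j i
    by_cases h : c i = j
    · right; rw [hγ]; simp only; rw [aux_tot c gs hgs, h]
    · left; exact hgs j i h
  -- pieces of monomials
  let mp : (Fin n × ℕ →₀ ℕ) → Fin ℓ → PolyQ n :=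
    fun m j => monomial (m.filter (fun p => c p.1 = j)) 1
  have hmpvars : ∀ m ∈ f.support, ∀ j, ∀ p ∈ (mp m j).vars, p.2 < gs j p.1 := by
    intro m hm j p hp
    simp only [mp] at hp
    rw [vars_monomial one_ne_zero, Finsupp.support_filter, Finset.mem_filter] at hp
    have h1 : p.2 < ∑ j, gs j p.1 := hfmem.1 p ((mem_vars_iff_mem_support p).mpr ⟨m, hm, hp.1⟩)
    rw [aux_tot c gs hgs, hp.2] at h1
    exact h1
  have hmpprod : ∀ m, ∏ j, mp m j = monomial m 1 := by
    intro m
    simp only [mp]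
    rw [← monomial_sum_one]
    have hm : ∑ j, Finsupp.filter (fun p : Fin n × ℕ => c p.1 = j) m = m := ?_
    · rw [hm]
    ext p
    rw [Finsupp.finsetSum_apply, Finset.sum_eq_single (c p.1)]
    · simp
    · intro j _ hj; simp [hj.symm]
    · simp
  have hRprod : ∀ m ∈ f.support, ∏ j, auxR γ (mp m j) =
      ∑ h : Fin ℓ → auxG γ, rename (auxAct γ (fun i => h (c i) i)) (monomial m (1 : ℚ)) := by
    intro m hm
    simp only [auxR]
    rw [Finset.prod_univ_sum, Fintype.piFinset_univ]
    refine Finset.sum_congr rfl fun h _ => ?_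
    rw [← hmpprod m, map_prod]
    refine Finset.prod_congr rfl fun j _ => ?_
    refine aux_rename_congr _ fun p hp => ?_
    have h1 := hmpvars m hm j p hp
    have h2 : c p.1 = j := by
      by_contra h
      rw [hgs j p.1 h] at h1; omega
    simp only [auxAct, h2]
  set N : ℚ := ((Fintype.card (Fin ℓ → auxG γ) : ℕ) : ℚ) with hN
  have hN0 : N ≠ 0 := by
    rw [hN]; exact_mod_cast Fintype.card_ne_zero
  have hsum : ∑ m ∈ f.support, coeff m f • ∏ j, auxR γ (mp m j) = N • f := by
    rw [Finset.sum_congr rfl fun m hm => by rw [hRprod m hm, Finset.smul_sum]]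
    rw [Finset.sum_comm]
    have : ∀ h : Fin ℓ → auxG γ, ∑ m ∈ f.support,
        coeff m f • rename (auxAct γ (fun i => h (c i) i)) (monomial m (1 : ℚ)) = f := by
      intro h
      rw [Finset.sum_congr rfl fun m _ => (map_smul _ _ _).symm, ← map_sum]
      have hf' : ∑ m ∈ f.support, coeff m f • monomial m (1 : ℚ) = f := by
        conv_rhs => rw [f.as_sum]
        refine Finset.sum_congr rfl fun m _ => ?_
        rw [smul_monomial]; simp
      rw [hf']
      exact auxAct_fix γ _ f hfmem.2
    rw [Finset.sum_congr rfl fun h _ => this h, Finset.sum_const, Finset.card_univ,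
      ← Nat.cast_smul_eq_nsmul ℚ]
  refine ⟨N⁻¹ • ∑ m ∈ f.support.attach, coeff m.1 f •
    PiTensorProduct.tprod ℚ (fun j : Fin ℓ =>
      (⟨auxR γ (mp m.1 j), auxR_mem γ (gs j) (hδ j) _ (hmpvars m.1 m.2 j)⟩ : ↥(Hspace (gs j)))), ?_⟩
  apply Subtype.ext
  rw [map_smul, map_sum, Submodule.coe_smul, AddSubmonoidClass.coe_finsetSum]
  simp only [map_smul, PiTensorProduct.lift.tprod, Submodule.coe_smul, auxM_coe]
  rw [Finset.sum_attach f.support (fun m => coeff m f • ∏ j, auxR γ (mp m j)), hsum, smul_smul,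
    inv_mul_cancel₀ hN0, one_smul]

lemma aux_directSum {ι κ : Type} [DecidableEq ι] [DecidableEq κ] (M : ι → Type) (N : κ → Type)
    [∀ i, AddCommMonoid (M i)] [∀ i, Module ℚ (M i)] [∀ i, AddCommMonoid (N i)]
    [∀ i, Module ℚ (N i)] (tot : ι → κ) (htot : Function.Bijective tot)
    (L : ∀ i, M i →ₗ[ℚ] N (tot i)) (hL : ∀ i, Function.Bijective (L i)) :
    ∃ Φ : (⨁ i, M i) →ₗ[ℚ] ⨁ k, N k,
      (∀ i t, Φ (DirectSum.of M i t) = DirectSum.of N (tot i) (L i t)) ∧ Function.Bijective Φ := by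
  have hΦ : ∀ i t, (DirectSum.toModule ℚ ι (⨁ k, N k)
      (fun i => (DirectSum.lof ℚ κ N (tot i)) ∘ₗ L i)) (DirectSum.of M i t)
        = DirectSum.of N (tot i) (L i t) := fun i t => DirectSum.toModule_lof ℚ i t
  generalize (DirectSum.toModule ℚ ι (⨁ k, N k)
      (fun i => (DirectSum.lof ℚ κ N (tot i)) ∘ₗ L i)) = Φ at hΦ
  refine ⟨Φ, hΦ, ?_, ?_⟩
  · have key : ∀ x i, (Φ x) (tot i) = L i (x i) := by
      intro x i
      induction x using DirectSum.induction_on with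
      | zero => simp
      | of i' t =>
        rw [hΦ]
        by_cases h : i' = i
        · subst h
          rw [DirectSum.of_eq_same, DirectSum.of_eq_same]
        · rw [DirectSum.of_eq_of_ne _ _ _ (fun h' => h (htot.1 h').symm),
            DirectSum.of_eq_of_ne _ _ _ (fun h' => h h'.symm), map_zero]
      | add x y hx hy =>
        rw [map_add, DirectSum.add_apply, DirectSum.add_apply, map_add, hx, hy]
    intro x y hxy
    refine DFinsupp.ext fun i => ?_
    apply (hL i).1
    rw [← key x i, ← key y i, hxy]
  · intro y
    induction y using DirectSum.induction_on with
    | zero => exact ⟨0, map_zero _⟩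
    | of γ f =>
      obtain ⟨i, rfl⟩ := htot.2 γ
      obtain ⟨t, rfl⟩ := (hL i).2 f
      exact ⟨_, hΦ i t⟩
    | add x y hx hy =>
      obtain ⟨a, rfl⟩ := hx
      obtain ⟨b, rfl⟩ := hy
      exact ⟨a + b, map_add _ _ _⟩

end aux2

/-- Let `𝒬• = (Q¹,…,Q^ℓ)` be an admissible, ordered, Dynkin
subquiver partition of the acyclic quiver `Q` such that every positive root of every
part has some coordinate equal to `1` (excluding `E₈` parts).  Then:
(a) for classes supported on a single part `Q^j`, the CoHA product of `ℋ(Q)` agrees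
with the CoHA product of the quiver `Q^j`; and
(b) the `ℚ`-linear map `⊕ (ℋ_{γ¹} ⊗ ⋯ ⊗ ℋ_{γ^ℓ}) → ℋ(Q)`, over all tuples of
dimension vectors with `γ^j` supported on `Q^j₀`, sending `g₁ ⊗ ⋯ ⊗ g_ℓ` to
`g₁ * ⋯ * g_ℓ`, is bijective — so it is an algebra isomorphism
`ℋ(Q¹) ⊗ ⋯ ⊗ ℋ(Q^ℓ) ≅ ℋ(Q)`. -/
theorem coha_dynkin_part_decomposition {n ℓ : ℕ} (Q : FinQuiver n) (hQ : Q.Acyclic)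
    (P : SubqPartition Q ℓ) (hord : P.Ordered) (hDyn : P.Dynkin)
    (hE8 : ∀ (j : Fin ℓ) (b : Fin n → ℕ), (P.part j).IsPosRoot b → ∃ i, b i = 1) :
    (∀ (j : Fin ℓ) (γ₁ γ₂ : Fin n → ℕ),
      (∀ i, i ∉ (P.part j).verts → γ₁ i = 0) → (∀ i, i ∉ (P.part j).verts → γ₂ i = 0) →
      ∀ g₁ ∈ Hspace γ₁, ∀ g₂ ∈ Hspace γ₂,
        cohaMul Q γ₁ γ₂ g₁ g₂ = cohaMul ((P.part j).toQuiver) γ₁ γ₂ g₁ g₂) ∧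
    ∃ Φ : (⨁ gs : {gs : Fin ℓ → Fin n → ℕ //
              ∀ j, ∀ i, i ∉ (P.part j).verts → gs j i = 0},
            ⨂[ℚ] j : Fin ℓ, ↥(Hspace (gs.1 j)))
        →ₗ[ℚ] ⨁ γ : Fin n → ℕ, ↥(Hspace γ),
      (∀ (gs : {gs : Fin ℓ → Fin n → ℕ //
            ∀ j, ∀ i, i ∉ (P.part j).verts → gs j i = 0})
          (g : (j : Fin ℓ) → ↥(Hspace (gs.1 j))),
        ∃ hmem : cohaProdFin Q (fun j => gs.1 j) (fun j => (g j : PolyQ n)) ∈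
            Hspace (fun v => ∑ j, gs.1 j v),
          Φ (DirectSum.of (fun gs' : {gs : Fin ℓ → Fin n → ℕ //
                  ∀ j, ∀ i, i ∉ (P.part j).verts → gs j i = 0} =>
                ⨂[ℚ] j : Fin ℓ, ↥(Hspace (gs'.1 j))) gs
              (PiTensorProduct.tprod ℚ g)) =
            DirectSum.of (fun γ : Fin n → ℕ => ↥(Hspace γ)) (fun v => ∑ j, gs.1 j v)
              ⟨cohaProdFin Q (fun j => gs.1 j) (fun j => (g j : PolyQ n)), hmem⟩) ∧
      Function.Bijective Φ := by
  obtain ⟨c, hc⟩ : ∃ c : Fin n → Fin ℓ, ∀ i j, i ∈ (P.part j).verts ↔ c i = j := by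
    choose c hc1 hc2 using P.cover
    refine ⟨c, fun i j => ⟨fun h => (hc2 i j h).symm, ?_⟩⟩
    rintro rfl
    exact hc1 i
  refine ⟨fun j γ₁ γ₂ h₁ h₂ g₁ _ g₂ _ => aux_partA Q _ (hDyn j).2.1 γ₁ γ₂ h₁ h₂ g₁ g₂, ?_⟩
  have hgs' : ∀ gs : {gs : Fin ℓ → Fin n → ℕ //
      ∀ j, ∀ i, i ∉ (P.part j).verts → gs j i = 0}, ∀ j i, c i ≠ j → gs.1 j i = 0 := by
    intro gs j i h
    exact gs.2 j i (fun h' => h ((hc i j).mp h'))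
  have hprod : ∀ (gs : {gs : Fin ℓ → Fin n → ℕ //
      ∀ j, ∀ i, i ∉ (P.part j).verts → gs j i = 0}) (g : (j : Fin ℓ) → ↥(Hspace (gs.1 j))),
      cohaProdFin Q (fun j => gs.1 j) (fun j => (g j : PolyQ n)) = ∏ j, (g j : PolyQ n) := by
    intro gs g
    refine aux_prodFin Q _ _ (fun j => (g j).2.1) fun i j hij => ⟨fun v => ?_, fun a => ?_⟩
    · by_contra h
      push Not at h
      have h1 : c v = i := by
        by_contra h'; exact h.1 (hgs' gs i v h')
      have h2 : c v = j := by
        by_contra h'; exact h.2 (hgs' gs j v h')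
      exact hij.ne (h1.symm.trans h2)
    · by_contra h
      push Not at h
      have h1 : c (Q.hd a) = j := by
        by_contra h'; exact h.1 (hgs' gs j _ h')
      have h2 : c (Q.tl a) = i := by
        by_contra h'; exact h.2 (hgs' gs i _ h')
      by_cases ha : a ∈ P.arrs
      · simp only [SubqPartition.arrs, Finset.mem_biUnion, Finset.mem_univ, true_and] at ha
        obtain ⟨k, hk⟩ := ha
        have h3 := (hc _ _).mp ((P.part k).hd_mem a hk)
        have h4 := (hc _ _).mp ((P.part k).tl_mem a hk)
        exact hij.ne (h2.symm.trans (h4.trans (h3.symm.trans h1)))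
      · exact absurd (hord a ha j i ((hc _ _).mpr h1) ((hc _ _).mpr h2)) (not_lt.mpr hij.le)
  let L := fun gs : {gs : Fin ℓ → Fin n → ℕ //
      ∀ j, ∀ i, i ∉ (P.part j).verts → gs j i = 0} =>
    PiTensorProduct.lift (auxM c gs.1 (hgs' gs))
  let tot : {gs : Fin ℓ → Fin n → ℕ //
      ∀ j, ∀ i, i ∉ (P.part j).verts → gs j i = 0} → Fin n → ℕ := fun gs v => ∑ j, gs.1 j v
  have htotinj : Function.Injective tot := by
    intro gs gs' h
    apply Subtype.ext
    funext j i
    by_cases hj : c i = j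
    · have := congrFun h i
      simp only [tot] at this
      rw [aux_tot c gs.1 (hgs' gs), aux_tot c gs'.1 (hgs' gs'), hj] at this
      exact this
    · rw [hgs' gs j i hj, hgs' gs' j i hj]
  have htotsurj : Function.Surjective tot := by
    intro γ
    let gs : {gs : Fin ℓ → Fin n → ℕ //
      ∀ j, ∀ i, i ∉ (P.part j).verts → gs j i = 0} :=
      ⟨fun j i => if c i = j then γ i else 0, fun j i h => by
        rw [hc] at h; simp [h]⟩
    refine ⟨gs, ?_⟩
    funext v
    simp only [tot]
    rw [aux_tot c gs.1 (hgs' gs)]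
    simp [gs]
  obtain ⟨Φ, hΦ, hbij⟩ := aux_directSum (fun gs' : {gs : Fin ℓ → Fin n → ℕ //
                  ∀ j, ∀ i, i ∉ (P.part j).verts → gs j i = 0} =>
                ⨂[ℚ] j : Fin ℓ, ↥(Hspace (gs'.1 j))) (fun γ : Fin n → ℕ => ↥(Hspace γ)) tot
      ⟨htotinj, htotsurj⟩ L (fun gs => ⟨aux_inj c gs.1 (hgs' gs), aux_surj c gs.1 (hgs' gs)⟩)
  refine ⟨Φ, ?_, hbij⟩
  · intro gs g
    refine ⟨?_, ?_⟩
    · rw [hprod gs g]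
      exact aux_prod_mem c gs.1 (hgs' gs) _ (fun j => (g j).2)
    · rw [hΦ]
      congr 1
      apply Subtype.ext
      simp only [L, PiTensorProduct.lift.tprod]
      rw [auxM_coe, hprod gs g]
end

section
/- Let Q be a finite acyclic quiver, Q' a full connected Dynkin subquiver of Q, β a positive root of Q', and i a vertex with β(i) = 1. For any univariate polynomials f₁,…,f_r ∈ ℚ[x], the iterated left-to-right CoHA product (f₁(ω_{i,1}) ∈ ℋ_β) * (f₂(ω_{i,1}) ∈ ℋ_β) * ⋯ * (f_r(ω_{i,1}) ∈ ℋ_β) ∈ ℋ_{r·β} depends only on the variables ω_{i,1},…,ω_{i,r} and equals the polynomial obtained from the ℋ(A₁)-product f₁(x₁) * f₂(x₁) * ⋯ * f_r(x₁) ∈ ℋ_r(A₁) by substituting x_b ↦ ω_{i,b} for b = 1,…,r. Consequently the subalgebra 𝒜_β of ℋ(Q) generated under * by {f(ω_{i,1}) : f ∈ ℚ[x]} ⊆ ℋ_β is isomorphic as an algebra to ℋ(A₁). -/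
open MvPolynomial
open scoped Classical

variable {n : ℕ}

lemma xx_irr {σ : Type*} {p q : σ} (h : p ≠ q) :
    Irreducible (X p - X q : MvPolynomial σ ℚ) := by
  have hc : coeff (Finsupp.single p 1) (X p - X q : MvPolynomial σ ℚ) = 1 := by
    rw [coeff_sub, coeff_X, coeff_X, if_pos rfl, if_neg]
    · simp
    · intro h'
      exact h (Finsupp.single_left_injective one_ne_zero h').symm
  apply irreducible_of_totalDegree_eq_one
  · apply le_antisymm
    · refine (totalDegree_sub _ _).trans ?_
      simp
    · have := le_totalDegree (p := (X p - X q : MvPolynomial σ ℚ)) (s := Finsupp.single p 1)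
        (by rw [mem_support_iff, hc]; exact one_ne_zero)
      simpa using this
  · intro x hx
    have := hx (Finsupp.single p 1)
    rw [hc] at this
    exact isUnit_of_dvd_one this

lemma xx_not_dvd {σ : Type*} {p q p' q' : σ} (h' : p' ≠ q')
    (h1 : ¬ (p' = p ∧ q' = q)) (h2 : ¬ (p' = q ∧ q' = p)) :
    ¬ ((X p - X q : MvPolynomial σ ℚ) ∣ X p' - X q') := by
  rintro ⟨c, hc⟩
  have := congrArg (aeval (fun t : σ => if t = p ∨ t = q then
      (if p' = p ∨ p' = q then (1 : ℚ) else 0) else (if t = p' then 1 else 0))) hc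
  simp only [map_sub, map_mul, aeval_X] at this
  grind

lemma xx_sub_swap_dvd {σ : Type*} [DecidableEq σ] {p q : σ} (M : MvPolynomial σ ℚ) :
    (X p - X q : MvPolynomial σ ℚ) ∣ M - rename (Equiv.swap p q) M := by
  induction M using MvPolynomial.induction_on with
  | C a => simp
  | add f g hf hg =>
    rw [map_add, add_sub_add_comm]
    exact dvd_add hf hg
  | mul_X f t hf =>
    have h1 : (X p - X q : MvPolynomial σ ℚ) ∣ X t - X (Equiv.swap p q t) := by
      by_cases h1 : t = p
      · subst h1; simp
      · by_cases h2 : t = q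
        · subst h2
          rw [Equiv.swap_apply_right, ← neg_sub (X p)]
          exact (dvd_neg).2 dvd_rfl
        · rw [Equiv.swap_apply_of_ne_of_ne h1 h2]; simp
    rw [map_mul, rename_X]
    have : f * X t - rename (Equiv.swap p q) f * X (Equiv.swap p q t)
      = (f - rename (Equiv.swap p q) f) * X t
        + rename (Equiv.swap p q) f * (X t - X (Equiv.swap p q t)) := by ring
    rw [this]
    exact dvd_add (hf.mul_right _) (h1.mul_left _)

lemma xx_sq_dvd {σ : Type*} [DecidableEq σ] {p q : σ} (N : MvPolynomial σ ℚ)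
    (hs : rename (Equiv.swap p q) N = N) (hd : (X p - X q : MvPolynomial σ ℚ) ∣ N) (h : p ≠ q) :
    (X p - X q) * (X q - X p) ∣ N := by
  obtain ⟨M, rfl⟩ := hd
  have hM : rename (Equiv.swap p q) M = - M := by
    rw [map_mul, map_sub, rename_X, rename_X, Equiv.swap_apply_left, Equiv.swap_apply_right] at hs
    have h0 : (X p - X q : MvPolynomial σ ℚ) ≠ 0 := (xx_irr h).ne_zero
    apply mul_left_cancel₀ h0
    linear_combination -hs
  have key : (X p - X q : MvPolynomial σ ℚ) ∣ M - rename (Equiv.swap p q) M := by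
    exact xx_sub_swap_dvd M
  rw [hM] at key
  apply mul_dvd_mul_left
  have h2 : (X p - X q : MvPolynomial σ ℚ) ∣ M := by
    have : M = C (1/2) * (M - -M) := by
      have : (C (1/2) : MvPolynomial σ ℚ) * 2 = 1 := by
        rw [show (2 : MvPolynomial σ ℚ) = C 2 from (map_ofNat C 2).symm, ← C_mul]; norm_num
      linear_combination - M * this
    rw [this]
    exact key.mul_left _
  have := (neg_dvd (a := (X p - X q : MvPolynomial σ ℚ)) (b := M)).2 h2
  rwa [neg_sub] at this

lemma prod_offDiag_lt {M : Type*} [CommMonoid M] (s : Finset ℕ) (f : ℕ × ℕ → M) :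
    ∏ x ∈ s.offDiag, f x = ∏ x ∈ s.offDiag.filter (fun x => x.1 < x.2), f x * f x.swap := by
  rw [← Finset.prod_filter_mul_prod_filter_not s.offDiag (fun x => x.1 < x.2),
    Finset.prod_mul_distrib]
  congr 1
  refine Finset.prod_bij' (fun x _ => x.swap) (fun x _ => x.swap) ?_ ?_ ?_ ?_ ?_
  · intro x hx; simp only [Finset.mem_filter, Finset.mem_offDiag, Prod.fst_swap, Prod.snd_swap] at *
    grind
  · intro x hx; simp only [Finset.mem_filter, Finset.mem_offDiag, Prod.fst_swap, Prod.snd_swap] at *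
    grind
  all_goals simp

/-- the common denominator -/
noncomputable def offD (Vs : Finset (Fin n)) (N : Fin n → ℕ) : PolyQ n :=
  ∏ v ∈ Vs, ∏ x ∈ (Finset.range (N v)).offDiag, (X (v, x.1) - X (v, x.2))

lemma offD_ne_zero (Vs : Finset (Fin n)) (N : Fin n → ℕ) : offD Vs N ≠ 0 := by
  unfold offD
  rw [Finset.prod_ne_zero_iff]
  intro v _
  rw [Finset.prod_ne_zero_iff]
  intro x hx
  apply (xx_irr _).ne_zero
  intro h
  simp only [Prod.mk.injEq, true_and] at h
  simp only [Finset.mem_offDiag] at hx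
  exact hx.2.2 h

lemma vertexPerm_swap (v : Fin n) (p q : ℕ) :
    vertexPerm v (Equiv.swap p q) = Equiv.swap (v, p) (v, q) := by
  funext ⟨w, j⟩
  unfold vertexPerm
  simp only
  split_ifs with h
  · subst h
    simp only [Equiv.swap_apply_def, Prod.mk.injEq, true_and]
    split_ifs <;> rfl
  · rw [Equiv.swap_apply_of_ne_of_ne] <;> (intro h'; exact h (congrArg Prod.fst h'))

lemma offD_dvd (Vs : Finset (Fin n)) (N : Fin n → ℕ) (F : PolyQ n)
    (hs : ∀ v ∈ Vs, ∀ p < N v, ∀ q < N v, p ≠ q → rename (vertexPerm v (Equiv.swap p q)) F = F)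
    (hd : ∀ v ∈ Vs, ∀ p < N v, ∀ q < N v, p ≠ q → (X (v, p) - X (v, q) : PolyQ n) ∣ F) :
    offD Vs N ∣ F := by
  unfold offD
  have : ∀ v ∈ Vs, ∏ x ∈ (Finset.range (N v)).offDiag, (X (v, x.1) - X (v, x.2) : PolyQ n)
    = _ := fun v _ => prod_offDiag_lt _ _
  rw [Finset.prod_congr rfl this, Finset.prod_sigma']
  apply Finset.prod_dvd_of_isRelPrime
  · rintro ⟨v, p, q⟩ hx ⟨w, p', q'⟩ hy hne
    simp only [Finset.coe_sigma, Set.mem_sigma_iff, Finset.mem_coe, Finset.mem_filter,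
      Finset.mem_offDiag, Finset.mem_range] at hx hy
    simp only [Function.onFun, Prod.swap]
    have e1 : ((v, p) : Fin n × ℕ) ≠ (v, q) := by
      intro h; simp only [Prod.mk.injEq, true_and] at h; omega
    have e2 : ((w, p') : Fin n × ℕ) ≠ (w, q') := by
      intro h; simp only [Prod.mk.injEq, true_and] at h; omega
    have n1 : ¬ (((w, p') : Fin n × ℕ) = (v, p) ∧ ((w, q') : Fin n × ℕ) = (v, q)) := by
      rintro ⟨h1, h2⟩
      simp only [Prod.mk.injEq] at h1 h2
      apply hne
      rw [h1.1, h1.2, h2.2]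
    have n2 : ¬ (((w, p') : Fin n × ℕ) = (v, q) ∧ ((w, q') : Fin n × ℕ) = (v, p)) := by
      rintro ⟨h1, h2⟩
      simp only [Prod.mk.injEq] at h1 h2
      omega
    have r1 : IsRelPrime (X (v, p) - X (v, q) : PolyQ n) (X (w, p') - X (w, q')) :=
      ((xx_irr e1).isRelPrime_iff_not_dvd).2 (xx_not_dvd e2 n1 n2)
    have hn1 : (X (v, q) - X (v, p) : PolyQ n) = - (X (v, p) - X (v, q)) := by ring
    have hn2 : (X (w, q') - X (w, p') : PolyQ n) = - (X (w, p') - X (w, q')) := by ring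
    rw [hn1, hn2]
    apply IsRelPrime.mul_left <;> apply IsRelPrime.mul_right <;>
      simpa only [IsRelPrime.neg_left_iff, IsRelPrime.neg_right_iff] using r1
  · rintro ⟨v, p, q⟩ hx
    simp only [Finset.mem_sigma, Finset.mem_filter,
      Finset.mem_offDiag, Finset.mem_range] at hx
    have e1 : ((v, p) : Fin n × ℕ) ≠ (v, q) := by
      intro h; simp only [Prod.mk.injEq, true_and] at h; omega
    apply xx_sq_dvd _ _ (hd v hx.1 p hx.2.1.1 q hx.2.1.2.1 hx.2.1.2.2) e1
    rw [← vertexPerm_swap]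
    exact hs v hx.1 p hx.2.1.1 q hx.2.1.2.1 hx.2.1.2.2

noncomputable def denV (Vs : Finset (Fin n)) (γ₁ γ₂ : Fin n → ℕ) (S : Fin n → Finset ℕ) :
    PolyQ n :=
  ∏ v ∈ Vs, ∏ x ∈ shuffleCompl γ₁ γ₂ S v ×ˢ S v, (X (v, x.1) - X (v, x.2))

noncomputable def restE (Vs : Finset (Fin n)) (γ₁ γ₂ : Fin n → ℕ) (S : Fin n → Finset ℕ) :
    PolyQ n :=
  ∏ v ∈ Vs, ∏ x ∈ (Finset.range (γ₁ v + γ₂ v)).offDiag \ (shuffleCompl γ₁ γ₂ S v ×ˢ S v),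
    (X (v, x.1) - X (v, x.2))

lemma mem_shuffles {γ₁ γ₂ : Fin n → ℕ} {S : Fin n → Finset ℕ} :
    S ∈ shuffles γ₁ γ₂ ↔ ∀ v, S v ⊆ Finset.range (γ₁ v + γ₂ v) ∧ (S v).card = γ₁ v := by
  simp [shuffles, Fintype.mem_piFinset]

lemma compl_prod_sub {γ₁ γ₂ : Fin n → ℕ} {S : Fin n → Finset ℕ} (hS : S ∈ shuffles γ₁ γ₂)
    (v : Fin n) :
    shuffleCompl γ₁ γ₂ S v ×ˢ S v ⊆ (Finset.range (γ₁ v + γ₂ v)).offDiag := by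
  rw [mem_shuffles] at hS
  intro x hx
  have := (hS v).1
  simp only [shuffleCompl, Finset.mem_product, Finset.mem_sdiff, Finset.mem_offDiag] at *
  refine ⟨hx.1.1, this hx.2, ?_⟩
  intro h
  rw [h] at hx
  exact hx.1.2 hx.2

lemma denV_mul_restE (Vs : Finset (Fin n)) {γ₁ γ₂ : Fin n → ℕ} {S : Fin n → Finset ℕ}
    (hS : S ∈ shuffles γ₁ γ₂) :
    denV Vs γ₁ γ₂ S * restE Vs γ₁ γ₂ S = offD Vs (fun v => γ₁ v + γ₂ v) := by
  unfold denV restE offD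
  rw [← Finset.prod_mul_distrib]
  refine Finset.prod_congr rfl fun v _ => ?_
  rw [mul_comm]
  exact Finset.prod_sdiff (compl_prod_sub hS v)

lemma denV_ne_zero (Vs : Finset (Fin n)) {γ₁ γ₂ : Fin n → ℕ} {S : Fin n → Finset ℕ}
    (hS : S ∈ shuffles γ₁ γ₂) : denV Vs γ₁ γ₂ S ≠ 0 := by
  intro h
  have := denV_mul_restE Vs hS
  rw [h, zero_mul] at this
  exact offD_ne_zero _ _ this.symm

lemma dvd_restE (Vs : Finset (Fin n)) (γ₁ γ₂ : Fin n → ℕ) (S : Fin n → Finset ℕ)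
    {v : Fin n} (hv : v ∈ Vs) {p q : ℕ} (hp : p < γ₁ v + γ₂ v) (hq : q < γ₁ v + γ₂ v)
    (hpq : p ≠ q) : (X (v, p) - X (v, q) : PolyQ n) ∣ restE Vs γ₁ γ₂ S := by
  have hout := Finset.dvd_prod_of_mem (fun v => ∏ x ∈ (Finset.range (γ₁ v + γ₂ v)).offDiag \
    (shuffleCompl γ₁ γ₂ S v ×ˢ S v), (X (v, x.1) - X (v, x.2) : PolyQ n)) hv
  unfold restE
  refine dvd_trans ?_ hout
  by_cases h : (p, q) ∈ shuffleCompl γ₁ γ₂ S v ×ˢ S v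
  · have h2 : (q, p) ∈ (Finset.range (γ₁ v + γ₂ v)).offDiag \ (shuffleCompl γ₁ γ₂ S v ×ˢ S v) := by
      simp only [shuffleCompl, Finset.mem_product, Finset.mem_sdiff, Finset.mem_offDiag,
        Finset.mem_range] at *
      tauto
    have h3 := Finset.dvd_prod_of_mem (fun x : ℕ × ℕ => (X (v, x.1) - X (v, x.2) : PolyQ n)) h2
    simp only at h3 ⊢
    rw [← neg_sub, neg_dvd]
    exact h3
  · have h2 : (p, q) ∈ (Finset.range (γ₁ v + γ₂ v)).offDiag \ (shuffleCompl γ₁ γ₂ S v ×ˢ S v) := by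
      rw [Finset.mem_sdiff]
      refine ⟨?_, h⟩
      simp only [Finset.mem_offDiag, Finset.mem_range]
      exact ⟨hp, hq, hpq⟩
    have h3 := Finset.dvd_prod_of_mem (fun x : ℕ × ℕ => (X (v, x.1) - X (v, x.2) : PolyQ n)) h2
    simp only at h3 ⊢
    exact h3

def famPerm (τ : Fin n → Equiv.Perm ℕ) (p : Fin n × ℕ) : Fin n × ℕ := (p.1, τ p.1 p.2)

def mapS (τ : Fin n → Equiv.Perm ℕ) (S : Fin n → Finset ℕ) : Fin n → Finset ℕ :=
  fun v => (S v).map (τ v).toEmbedding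

lemma vertexPerm_eq_fam (v : Fin n) (π : Equiv.Perm ℕ) :
    vertexPerm v π = famPerm (fun w => if w = v then π else 1) := by
  funext ⟨w, j⟩
  unfold vertexPerm famPerm
  simp only
  split_ifs with h
  · rw [h]
  · rfl

lemma mapS_mapS_inv (τ : Fin n → Equiv.Perm ℕ) (S : Fin n → Finset ℕ) :
    mapS τ (mapS (fun v => (τ v)⁻¹) S) = S := by
  funext v
  ext j
  simp only [mapS, Finset.mem_map_equiv]
  show τ v ((τ v).symm j) ∈ S v ↔ _
  rw [Equiv.apply_symm_apply]

lemma mapS_inv_mapS (τ : Fin n → Equiv.Perm ℕ) (S : Fin n → Finset ℕ) :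
    mapS (fun v => (τ v)⁻¹) (mapS τ S) = S := by
  funext v
  ext j
  simp only [mapS, Finset.mem_map_equiv]
  show (τ v).symm (τ v j) ∈ S v ↔ _
  rw [Equiv.symm_apply_apply]

def Pres (γ₁ γ₂ : Fin n → ℕ) (τ : Fin n → Equiv.Perm ℕ) : Prop :=
  ∀ v j, τ v j < γ₁ v + γ₂ v ↔ j < γ₁ v + γ₂ v

lemma Pres.inv {γ₁ γ₂ : Fin n → ℕ} {τ : Fin n → Equiv.Perm ℕ} (h : Pres γ₁ γ₂ τ) :
    Pres γ₁ γ₂ (fun v => (τ v)⁻¹) := by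
  intro v j
  have := h v ((τ v)⁻¹ j)
  simpa using this.symm

lemma map_range_of_pres {N : ℕ} {π : Equiv.Perm ℕ} (h : ∀ j, π j < N ↔ j < N) :
    (Finset.range N).map π.toEmbedding = Finset.range N := by
  ext j
  rw [Finset.mem_map_equiv, Finset.mem_range, Finset.mem_range, ← h]
  simp

lemma mapS_mem {γ₁ γ₂ : Fin n → ℕ} {τ : Fin n → Equiv.Perm ℕ} (h : Pres γ₁ γ₂ τ)
    {S : Fin n → Finset ℕ} (hS : S ∈ shuffles γ₁ γ₂) : mapS τ S ∈ shuffles γ₁ γ₂ := by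
  rw [mem_shuffles] at *
  intro v
  refine ⟨?_, by rw [mapS, Finset.card_map]; exact (hS v).2⟩
  rw [← map_range_of_pres (h v)]
  exact Finset.map_subset_map.2 (hS v).1

lemma mapS_compl {γ₁ γ₂ : Fin n → ℕ} {τ : Fin n → Equiv.Perm ℕ} (h : Pres γ₁ γ₂ τ)
    (S : Fin n → Finset ℕ) :
    shuffleCompl γ₁ γ₂ (mapS τ S) = mapS τ (shuffleCompl γ₁ γ₂ S) := by
  funext v
  ext j
  have := h v ((τ v).symm j)
  simp only [Equiv.apply_symm_apply] at this
  simp only [shuffleCompl, mapS, Finset.mem_sdiff, Finset.mem_map_equiv, Finset.mem_range, this]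

lemma rename_num (Q : FinQuiver n) {γ₁ γ₂ : Fin n → ℕ} {τ : Fin n → Equiv.Perm ℕ}
    (h : Pres γ₁ γ₂ τ) (S : Fin n → Finset ℕ) :
    rename (famPerm τ) (interactionNum Q γ₁ γ₂ S) = interactionNum Q γ₁ γ₂ (mapS τ S) := by
  unfold interactionNum arrowFactor
  rw [mapS_compl h]
  simp only [map_prod, map_sub, rename_X, mapS, Finset.prod_map, famPerm]
  rfl

lemma rename_pairs (v : Fin n) (τ : Fin n → Equiv.Perm ℕ) (P : Finset (ℕ × ℕ)) :
    rename (famPerm τ) (∏ x ∈ P, (X (v, x.1) - X (v, x.2) : PolyQ n)) =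
      ∏ x ∈ P.map ((τ v).prodCongr (τ v)).toEmbedding, (X (v, x.1) - X (v, x.2)) := by
  simp only [map_prod, map_sub, rename_X, Finset.prod_map, famPerm]
  rfl

lemma map_offDiag (N : ℕ) {π : Equiv.Perm ℕ} (h : ∀ j, π j < N ↔ j < N) :
    (Finset.range N).offDiag.map (π.prodCongr π).toEmbedding = (Finset.range N).offDiag := by
  ext ⟨a, b⟩
  have ha := h (π.symm a)
  have hb := h (π.symm b)
  simp only [Equiv.apply_symm_apply] at ha hb
  simp [Finset.mem_map_equiv, ha, hb]

lemma rename_offD (Vs : Finset (Fin n)) {γ₁ γ₂ : Fin n → ℕ} {τ : Fin n → Equiv.Perm ℕ}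
    (h : Pres γ₁ γ₂ τ) :
    rename (famPerm τ) (offD Vs (fun v => γ₁ v + γ₂ v)) = offD Vs (fun v => γ₁ v + γ₂ v) := by
  unfold offD
  rw [map_prod]
  refine Finset.prod_congr rfl fun v _ => ?_
  rw [rename_pairs, map_offDiag _ (h v)]

lemma rename_restE (Vs : Finset (Fin n)) {γ₁ γ₂ : Fin n → ℕ} {τ : Fin n → Equiv.Perm ℕ}
    (h : Pres γ₁ γ₂ τ) (S : Fin n → Finset ℕ) :
    rename (famPerm τ) (restE Vs γ₁ γ₂ S) = restE Vs γ₁ γ₂ (mapS τ S) := by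
  unfold restE
  rw [map_prod]
  refine Finset.prod_congr rfl fun v _ => ?_
  rw [rename_pairs, mapS_compl h, Finset.map_sdiff, map_offDiag _ (h v)]
  congr 2
  ext ⟨a, b⟩
  simp [mapS, Finset.mem_map_equiv]

/-- the common numerator of the partial sum with `S i = T` -/
noncomputable def partN (Q : FinQuiver n) (γ₁ γ₂ : Fin n → ℕ) (i : Fin n) (T : Finset ℕ) :
    PolyQ n :=
  ∑ S ∈ (shuffles γ₁ γ₂).filter (fun S => S i = T),
    interactionNum Q γ₁ γ₂ S * restE (Finset.univ.erase i) γ₁ γ₂ S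

lemma partN_dvd (Q : FinQuiver n) (γ₁ γ₂ : Fin n → ℕ) (i : Fin n) (T : Finset ℕ) :
    offD (Finset.univ.erase i) (fun v => γ₁ v + γ₂ v) ∣ partN Q γ₁ γ₂ i T := by
  apply offD_dvd
  · intro v hv p hp q hq hpq
    rw [vertexPerm_eq_fam]
    set τ : Fin n → Equiv.Perm ℕ := fun w => if w = v then Equiv.swap p q else 1 with hτ
    have hP : Pres γ₁ γ₂ τ := by
      intro w j
      simp only [hτ]
      split_ifs with h
      · subst h
        rw [Equiv.swap_apply_def]
        split_ifs with h1 h2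
        · subst h1; exact iff_of_true hq hp
        · subst h2; exact iff_of_true hp hq
        · rfl
      · rfl
    have hi : τ i = 1 := by
      simp only [hτ]
      rw [if_neg]
      rintro rfl
      simp at hv
    have hmi : ∀ S, mapS τ S i = S i := by
      intro S; simp only [mapS, hi]; exact Finset.map_refl
    have hmi2 : ∀ S, mapS (fun v => (τ v)⁻¹) S i = S i := by
      intro S; simp only [mapS, hi, inv_one]; exact Finset.map_refl
    unfold partN
    rw [map_sum]
    refine Finset.sum_bij' (fun S _ => mapS τ S) (fun S _ => mapS (fun v => (τ v)⁻¹) S) ?_ ?_ ?_ ?_ ?_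
    · intro S hS
      rw [Finset.mem_filter] at *
      exact ⟨mapS_mem hP hS.1, by rw [hmi]; exact hS.2⟩
    · intro S hS
      rw [Finset.mem_filter] at *
      exact ⟨mapS_mem hP.inv hS.1, by rw [hmi2]; exact hS.2⟩
    · intro S _; exact mapS_inv_mapS _ _
    · intro S _; exact mapS_mapS_inv _ _
    · intro S _
      rw [map_mul, rename_num Q hP, rename_restE _ hP]
  · intro v hv p hp q hq hpq
    exact Finset.dvd_sum fun S _ => (dvd_restE _ _ _ _ hv hp hq hpq).mul_left _

lemma totalDegree_pairs_le {ι : Type*} (P : Finset ι) (f g : ι → Fin n × ℕ) :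
    (∏ x ∈ P, (X (f x) - X (g x) : PolyQ n)).totalDegree ≤ P.card := by
  refine (totalDegree_finsetProd _ _).trans ?_
  refine (Finset.sum_le_card_nsmul P _ 1 ?_).trans (by simp)
  intro x _
  refine (totalDegree_sub _ _).trans ?_
  simp

lemma totalDegree_prod_eq {R σ ι : Type*} [CommRing R] [IsDomain R] (s : Finset ι)
    (f : ι → MvPolynomial σ R) (h : ∀ x ∈ s, f x ≠ 0) :
    (∏ x ∈ s, f x).totalDegree = ∑ x ∈ s, (f x).totalDegree := by
  induction s using Finset.induction_on with
  | empty => simp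
  | insert a s ha ih =>
    rw [Finset.prod_insert ha, Finset.sum_insert ha, totalDegree_mul_of_isDomain
      (h a (Finset.mem_insert_self _ _)), ih fun x hx => h x (Finset.mem_insert_of_mem hx)]
    exact Finset.prod_ne_zero_iff.2 fun x hx => h x (Finset.mem_insert_of_mem hx)

lemma totalDegree_offD (Vs : Finset (Fin n)) (N : Fin n → ℕ) :
    (offD Vs N).totalDegree = ∑ v ∈ Vs, ((Finset.range (N v)).offDiag).card := by
  have h := offD_ne_zero Vs N
  unfold offD at *
  rw [Finset.prod_ne_zero_iff] at h
  rw [totalDegree_prod_eq _ _ h]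
  refine Finset.sum_congr rfl fun v hv => ?_
  have h2 := h v hv
  rw [Finset.prod_ne_zero_iff] at h2
  rw [totalDegree_prod_eq _ _ h2, Finset.card_eq_sum_ones]
  refine Finset.sum_congr rfl fun x hx => ?_
  apply le_antisymm
  · refine (totalDegree_sub _ _).trans ?_
    simp
  · have hne : ((v, x.1) : Fin n × ℕ) ≠ (v, x.2) := by
      intro h
      simp only [Prod.mk.injEq, true_and] at h
      exact (Finset.mem_offDiag.1 hx).2.2 h
    have hir := xx_irr hne
    by_contra hlt
    have h0 : (X (v, x.1) - X (v, x.2) : PolyQ n).totalDegree = 0 := by omega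
    rw [totalDegree_eq_zero_iff_eq_C] at h0
    have hc := h2 x hx
    apply hir.not_isUnit
    rw [h0] at hc ⊢
    rw [ne_eq, C_eq_zero] at hc
    exact (IsUnit.mk0 _ hc).map C

lemma partN_const (Q : FinQuiver n) (γ₁ γ₂ : Fin n → ℕ) (i : Fin n) (T : Finset ℕ)
    (hdeg : ∑ a : Q.Arr, γ₂ (Q.hd a) * γ₁ (Q.tl a) ≤ ∑ v ∈ Finset.univ.erase i, γ₂ v * γ₁ v) :
    ∃ c : ℚ, partN Q γ₁ γ₂ i T = offD (Finset.univ.erase i) (fun v => γ₁ v + γ₂ v) * C c := by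
  obtain ⟨P, hP⟩ := partN_dvd Q γ₁ γ₂ i T
  by_cases hP0 : P = 0
  · exact ⟨0, by rw [hP, hP0]; simp⟩
  have hle : (partN Q γ₁ γ₂ i T).totalDegree ≤
      (offD (Finset.univ.erase i) (fun v => γ₁ v + γ₂ v)).totalDegree := by
    rw [totalDegree_offD]
    unfold partN
    apply totalDegree_finsetSum_le
    intro S hS
    have hS := (Finset.mem_filter.1 hS).1
    have hS' := mem_shuffles.1 hS
    have hcard : ∀ v, (shuffleCompl γ₁ γ₂ S v).card = γ₂ v := by
      intro v
      rw [shuffleCompl, Finset.card_sdiff_of_subset (hS' v).1, (hS' v).2, Finset.card_range]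
      omega
    refine (totalDegree_mul _ _).trans ?_
    have h1 : (interactionNum Q γ₁ γ₂ S).totalDegree ≤
        ∑ a : Q.Arr, γ₂ (Q.hd a) * γ₁ (Q.tl a) := by
      unfold interactionNum arrowFactor
      refine (totalDegree_finsetProd _ _).trans (Finset.sum_le_sum fun a _ => ?_)
      rw [← Finset.prod_product']
      refine (totalDegree_pairs_le _ (fun x : ℕ × ℕ => (Q.hd a, x.1)) (fun x => (Q.tl a, x.2))).trans ?_
      rw [Finset.card_product, hcard, (hS' _).2]
    have h2 : (restE (Finset.univ.erase i) γ₁ γ₂ S).totalDegree + ∑ v ∈ Finset.univ.erase i, γ₂ v * γ₁ v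
        ≤ ∑ v ∈ Finset.univ.erase i, ((Finset.range (γ₁ v + γ₂ v)).offDiag).card := by
      unfold restE
      refine (add_le_add_left (totalDegree_finsetProd _ _) _).trans ?_
      rw [← Finset.sum_add_distrib]
      refine Finset.sum_le_sum fun v _ => ?_
      have h3 := totalDegree_pairs_le (n := n)
        ((Finset.range (γ₁ v + γ₂ v)).offDiag \ (shuffleCompl γ₁ γ₂ S v ×ˢ S v))
        (fun x : ℕ × ℕ => (v, x.1)) (fun x => (v, x.2))
      have h4 := Finset.card_sdiff_add_card_eq_card (compl_prod_sub hS v)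
      rw [Finset.card_product, hcard, (hS' _).2] at h4
      omega
    omega
  rw [hP, totalDegree_mul_of_isDomain (offD_ne_zero _ _) hP0] at hle
  have h0 : P.totalDegree = 0 := by omega
  rw [totalDegree_eq_zero_iff_eq_C] at h0
  exact ⟨_, by rw [hP, ← h0]⟩

def chiQ (Q : FinQuiver n) (α α' : Fin n → ℤ) : ℤ :=
  ∑ v, α v * α' v - ∑ a : Q.Arr, α (Q.tl a) * α' (Q.hd a)

lemma eulerZ_eq_chiQ {Q : FinQuiver n} (Q' : Subquiver Q) (hF : Q'.Full) (α : Fin n → ℤ)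
    (h : ∀ v, v ∉ Q'.verts → α v = 0) : Q'.eulerZ α α = chiQ Q α α := by
  unfold Subquiver.eulerZ chiQ
  congr 1
  · refine Finset.sum_subset (Finset.subset_univ _) fun v _ hv => ?_
    rw [h v hv, zero_mul]
  · refine Finset.sum_subset (Finset.subset_univ _) fun a _ ha => ?_
    by_cases h1 : Q.hd a ∈ Q'.verts
    · by_cases h2 : Q.tl a ∈ Q'.verts
      · exact absurd (hF a h1 h2) ha
      · rw [h _ h2, zero_mul]
    · rw [h _ h1, mul_zero]

/-- specialization -/
noncomputable def spv (β : Fin n → ℕ) (p : Fin n × ℕ) : Polynomial ℚ :=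
  Polynomial.C ((p.2 / β p.1 : ℕ) : ℚ) + Polynomial.C ((p.2 % β p.1 : ℕ) : ℚ) * Polynomial.X

noncomputable def spec (β : Fin n → ℕ) : PolyQ n →ₐ[ℚ] Polynomial ℚ := aeval (spv β)

noncomputable def uu (β : Fin n → ℕ) (p q : Fin n × ℕ) : Polynomial ℚ :=
  if p.2 / β p.1 = q.2 / β q.1 then
    Polynomial.C (((p.2 % β p.1 : ℕ) : ℚ) - ((q.2 % β q.1 : ℕ) : ℚ))
  else spv β p - spv β q

lemma spec_factor (β : Fin n → ℕ) (p q : Fin n × ℕ) :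
    spec β (X p - X q) =
      Polynomial.X ^ (if p.2 / β p.1 = q.2 / β q.1 then 1 else 0) * uu β p q := by
  unfold spec uu
  rw [map_sub, aeval_X, aeval_X]
  split_ifs with h
  · unfold spv
    rw [h, Polynomial.C_sub]
    ring
  · simp

def sameP (β : Fin n → ℕ) (v w : Fin n) (P : Finset (ℕ × ℕ)) : ℕ :=
  (P.filter fun x => x.1 / β v = x.2 / β w).card

noncomputable def uuP (β : Fin n → ℕ) (v w : Fin n) (P : Finset (ℕ × ℕ)) : Polynomial ℚ :=
  ∏ x ∈ P, uu β (v, x.1) (w, x.2)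

lemma spec_pairs (β : Fin n → ℕ) (v w : Fin n) (P : Finset (ℕ × ℕ)) :
    spec β (∏ x ∈ P, (X (v, x.1) - X (w, x.2))) =
      Polynomial.X ^ (sameP β v w P) * uuP β v w P := by
  rw [map_prod]
  simp only [spec_factor]
  rw [Finset.prod_mul_distrib, Finset.prod_pow_eq_pow_sum, sameP, Finset.card_filter, uuP]

lemma spec_num (Q : FinQuiver n) (β γ₁ γ₂ : Fin n → ℕ) (S : Fin n → Finset ℕ) :
    spec β (interactionNum Q γ₁ γ₂ S) =
      Polynomial.X ^ (∑ a, sameP β (Q.hd a) (Q.tl a) (shuffleCompl γ₁ γ₂ S (Q.hd a) ×ˢ S (Q.tl a)))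
      * ∏ a, uuP β (Q.hd a) (Q.tl a) (shuffleCompl γ₁ γ₂ S (Q.hd a) ×ˢ S (Q.tl a)) := by
  unfold interactionNum arrowFactor
  simp only [← Finset.prod_product']
  rw [map_prod]
  simp only [spec_pairs]
  rw [Finset.prod_mul_distrib, Finset.prod_pow_eq_pow_sum]

lemma spec_vs (β : Fin n → ℕ) (Vs : Finset (Fin n)) (P : Fin n → Finset (ℕ × ℕ)) :
    spec β (∏ v ∈ Vs, ∏ x ∈ P v, (X (v, x.1) - X (v, x.2))) =
      Polynomial.X ^ (∑ v ∈ Vs, sameP β v v (P v)) * ∏ v ∈ Vs, uuP β v v (P v) := by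
  rw [map_prod]
  simp only [spec_pairs]
  rw [Finset.prod_mul_distrib, Finset.prod_pow_eq_pow_sum]

lemma card_fiber (m N b : ℕ) (hb : b < N) :
    ((Finset.range (N * m)).filter fun j => j / m = b).card = m := by
  rcases Nat.eq_zero_or_pos m with rfl | hm
  · simp
  have : ((Finset.range (N * m)).filter fun j => j / m = b) = Finset.Ico (b * m) ((b + 1) * m) := by
    ext j
    rw [Finset.mem_filter, Finset.mem_range, Finset.mem_Ico, Nat.div_eq_iff hm]
    constructor
    · rintro ⟨h1, h2⟩
      rw [add_mul]; omega
    · rintro ⟨h1, h2⟩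
      have : (b + 1) * m ≤ N * m := Nat.mul_le_mul_right _ hb
      rw [add_mul] at h2 this
      omega
  rw [this, Nat.card_Ico, add_mul]
  omega

def preB (m N : ℕ) (B : Finset ℕ) : Finset ℕ := (Finset.range (N * m)).filter fun j => j / m ∈ B

lemma preB_fiber {m N : ℕ} {B : Finset ℕ} (hB : B ⊆ Finset.range N) {b : ℕ} (hb : b ∈ B) :
    ((preB m N B).filter fun j => j / m = b).card = m := by
  refine Eq.trans ?_ (card_fiber m N b (Finset.mem_range.1 (hB hb)))
  congr 1
  ext j
  simp only [preB, Finset.mem_filter]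
  constructor
  · rintro ⟨h1, h2⟩; exact ⟨h1.1, h2⟩
  · rintro ⟨h1, h2⟩; exact ⟨⟨h1, h2 ▸ hb⟩, h2⟩

lemma card_preB {m N : ℕ} {B : Finset ℕ} (hB : B ⊆ Finset.range N) :
    (preB m N B).card = B.card * m := by
  rw [Finset.card_eq_sum_card_fiberwise (f := fun j => j / m) (t := B)]
  · rw [Finset.sum_congr rfl fun b hb => preB_fiber hB hb]
    simp
  · intro j hj
    exact (Finset.mem_filter.1 (Finset.mem_coe.1 hj)).2

lemma prod_preB {m N : ℕ} {B : Finset ℕ} (hB : B ⊆ Finset.range N) (F : ℕ → ℚ) :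
    ∏ j ∈ preB m N B, F (j / m) = (∏ b ∈ B, F b) ^ m := by
  rw [← Finset.prod_fiberwise_of_maps_to (g := fun j => j / m) (t := B)]
  · rw [← Finset.prod_pow]
    refine Finset.prod_congr rfl fun b hb => ?_
    rw [Finset.prod_congr rfl (g := fun _ => F b), Finset.prod_const, preB_fiber hB hb]
    intro j hj
    rw [(Finset.mem_filter.1 hj).2]
  · intro j hj
    exact (Finset.mem_filter.1 hj).2

lemma card_same {A B : Finset ℕ} {m m' N : ℕ} (hA : ∀ j ∈ A, j / m < N) :
    ((A ×ˢ B).filter fun x => x.1 / m = x.2 / m').card =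
      ∑ b ∈ Finset.range N, (A.filter fun j => j / m = b).card * (B.filter fun j => j / m' = b).card := by
  rw [Finset.card_eq_sum_card_fiberwise (f := fun x => x.1 / m) (t := Finset.range N)]
  · refine Finset.sum_congr rfl fun b _ => ?_
    rw [← Finset.card_product]
    congr 1
    ext x
    simp only [Finset.mem_filter, Finset.mem_product]
    constructor
    · rintro ⟨⟨⟨h1, h2⟩, h3⟩, h4⟩
      exact ⟨⟨h1, h4⟩, h2, h3 ▸ h4⟩
    · rintro ⟨⟨h1, h4⟩, h2, h3⟩
      exact ⟨⟨⟨h1, h2⟩, h4.trans h3.symm⟩, h4⟩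
  · intro x hx
    have := (Finset.mem_filter.1 (Finset.mem_coe.1 hx)).1
    exact Finset.mem_coe.2 (Finset.mem_range.2 (hA _ (Finset.mem_product.1 this).1))

lemma div_lt_of_lt_mul' {j m N : ℕ} (h : j < N * m) : j / m < N := by
  rcases Nat.eq_zero_or_pos m with rfl | hm
  · simp at h
  · exact (Nat.div_lt_iff_lt_mul hm).2 h

def al (β : Fin n → ℕ) (S : Fin n → Finset ℕ) (b : ℕ) (v : Fin n) : ℤ :=
  (((S v).filter fun j => j / β v = b).card : ℤ)

def numSame (Q : FinQuiver n) (β γ₁ γ₂ : Fin n → ℕ) (S : Fin n → Finset ℕ) : ℕ :=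
  ∑ a, sameP β (Q.hd a) (Q.tl a) (shuffleCompl γ₁ γ₂ S (Q.hd a) ×ˢ S (Q.tl a))

def denSame (β γ₁ γ₂ : Fin n → ℕ) (i : Fin n) (S : Fin n → Finset ℕ) : ℕ :=
  ∑ v ∈ Finset.univ.erase i, sameP β v v (shuffleCompl γ₁ γ₂ S v ×ˢ S v)

section
variable {Q : FinQuiver n} {β : Fin n → ℕ} {r s : ℕ} {S : Fin n → Finset ℕ}

lemma al_compl (hS : S ∈ shuffles (fun v => r * β v) (fun v => s * β v)) {b : ℕ}
    (hb : b < r + s) (v : Fin n) :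
    (((shuffleCompl (fun v => r * β v) (fun v => s * β v) S v).filter
      fun j => j / β v = b).card : ℤ) = β v - al β S b v := by
  rw [mem_shuffles] at hS
  have h1 := card_fiber (β v) (r + s) b hb
  have h2 : ((Finset.range (r * β v + s * β v)).filter fun j => j / β v = b).card =
      ((shuffleCompl (fun v => r * β v) (fun v => s * β v) S v).filter
      fun j => j / β v = b).card + ((S v).filter fun j => j / β v = b).card := by
    have h3 : Finset.range (r * β v + s * β v) =
      shuffleCompl (fun v => r * β v) (fun v => s * β v) S v ∪ S v := by
      unfold shuffleCompl
      rw [Finset.sdiff_union_of_subset (hS v).1]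
    rw [h3, Finset.filter_union, Finset.card_union_of_disjoint]
    apply Finset.disjoint_filter_filter
    exact Finset.sdiff_disjoint
  rw [add_mul] at h1
  unfold al
  omega

lemma div_lt_compl {v : Fin n} : ∀ j ∈ shuffleCompl (fun v => r * β v) (fun v => s * β v) S v,
    j / β v < r + s := by
  intro j hj
  have := (Finset.mem_sdiff.1 hj).1
  rw [Finset.mem_range, ← add_mul] at this
  exact div_lt_of_lt_mul' this

lemma sameP_eq (hS : S ∈ shuffles (fun v => r * β v) (fun v => s * β v)) (v w : Fin n) :
    (sameP β v w (shuffleCompl (fun v => r * β v) (fun v => s * β v) S v ×ˢ S w) : ℤ) =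
    ∑ b ∈ Finset.range (r + s), (β v - al β S b v) * al β S b w := by
  unfold sameP
  rw [card_same (N := r + s) div_lt_compl]
  push_cast
  refine Finset.sum_congr rfl fun b hb => ?_
  rw [al_compl hS (Finset.mem_range.1 hb)]
  rfl

lemma al_sum (hS : S ∈ shuffles (fun v => r * β v) (fun v => s * β v)) (v : Fin n) :
    ∑ b ∈ Finset.range (r + s), al β S b v = r * β v := by
  have h := mem_shuffles.1 hS v
  have h2 := Finset.card_eq_sum_card_fiberwise (s := S v) (f := fun j => j / β v)
    (t := Finset.range (r + s)) (by
      intro j hj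
      have := h.1 hj
      rw [Finset.mem_range, ← add_mul] at this
      exact Finset.mem_coe.2 (Finset.mem_range.2 (div_lt_of_lt_mul' this)))
  rw [h.2] at h2
  unfold al
  exact_mod_cast h2.symm

lemma al_le (hS : S ∈ shuffles (fun v => r * β v) (fun v => s * β v)) {b : ℕ}
    (hb : b < r + s) (v : Fin n) : al β S b v ≤ β v := by
  have := al_compl hS hb v
  have h0 : (0 : ℤ) ≤ (((shuffleCompl (fun v => r * β v) (fun v => s * β v) S v).filter
      fun j => j / β v = b).card : ℤ) := by positivity
  omega

lemma al_nonneg (b : ℕ) (v : Fin n) : 0 ≤ al β S b v := by unfold al; positivity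

lemma excess (hS : S ∈ shuffles (fun v => r * β v) (fun v => s * β v)) {i : Fin n} (hi : β i = 1)
    (h1 : chiQ Q (fun v => β v) (fun v => β v) = 1) :
    (numSame Q β (fun v => r * β v) (fun v => s * β v) S : ℤ) -
      denSame β (fun v => r * β v) (fun v => s * β v) i S =
    ∑ b ∈ Finset.range (r + s), chiQ Q (al β S b) (al β S b) - r := by
  have hA : (numSame Q β (fun v => r * β v) (fun v => s * β v) S : ℤ) =
      ∑ b ∈ Finset.range (r + s), ∑ a, ((β (Q.hd a) : ℤ) - al β S b (Q.hd a)) * al β S b (Q.tl a) := by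
    unfold numSame
    push_cast
    rw [Finset.sum_comm]
    exact Finset.sum_congr rfl fun a _ => sameP_eq hS _ _
  have hD : (denSame β (fun v => r * β v) (fun v => s * β v) i S : ℤ) =
      ∑ b ∈ Finset.range (r + s), ∑ v, ((β v : ℤ) - al β S b v) * al β S b v := by
    unfold denSame
    push_cast
    rw [Finset.sum_comm]
    rw [← Finset.add_sum_erase _ _ (Finset.mem_univ i)]
    rw [Finset.sum_congr rfl fun v _ => sameP_eq hS _ _]
    rw [right_eq_add]
    refine Finset.sum_eq_zero fun b hb => ?_
    have h2 := al_le hS (Finset.mem_range.1 hb) i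
    have h3 := al_nonneg (β := β) (S := S) b i
    rw [hi] at h2 ⊢
    have : al β S b i = 0 ∨ al β S b i = 1 := by push_cast at h2; omega
    rcases this with h | h <;> rw [h] <;> simp
  have hr : (r : ℤ) = ∑ b ∈ Finset.range (r + s), chiQ Q (al β S b) (fun v => β v) := by
    unfold chiQ
    rw [Finset.sum_sub_distrib, Finset.sum_comm, Finset.sum_comm (s := Finset.range (r + s))]
    simp only [← Finset.sum_mul, al_sum hS]
    unfold chiQ at h1
    simp only [mul_assoc, ← Finset.mul_sum]
    rw [← mul_sub, h1, mul_one]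
  rw [hA, hD]
  conv_rhs => rw [hr]
  rw [← Finset.sum_sub_distrib, ← Finset.sum_sub_distrib]
  refine Finset.sum_congr rfl fun b _ => ?_
  unfold chiQ
  simp only [sub_mul, Finset.sum_sub_distrib]
  simp only [mul_comm (al β S b (Q.tl _))]
  simp only [mul_comm (al β S b _) (β _ : ℤ)]
  ring

lemma excess_nonneg (hS : S ∈ shuffles (fun v => r * β v) (fun v => s * β v)) {i : Fin n}
    (hi : β i = 1) (h1 : chiQ Q (fun v => β v) (fun v => β v) = 1)
    (h2 : ∀ α : Fin n → ℤ, (∀ v, β v = 0 → α v = 0) → α ≠ 0 → 0 < chiQ Q α α) :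
    denSame β (fun v => r * β v) (fun v => s * β v) i S ≤
      numSame Q β (fun v => r * β v) (fun v => s * β v) S ∧
    (numSame Q β (fun v => r * β v) (fun v => s * β v) S =
      denSame β (fun v => r * β v) (fun v => s * β v) i S →
      S = fun v => preB (β v) (r + s) (S i)) := by
  have he := excess (Q := Q) hS hi h1
  have hS' := mem_shuffles.1 hS
  have hsup : ∀ b < r + s, ∀ v, β v = 0 → al β S b v = 0 := by
    intro b hb v hv
    have := al_le hS hb v
    have := al_nonneg (β := β) (S := S) b v
    rw [hv] at *
    push_cast at *
    omega
  have hT : S i ⊆ Finset.range (r + s) := by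
    have := (hS' i).1
    simpa [hi] using this
  have hpos : ∀ b ∈ Finset.range (r + s),
      (if b ∈ S i then (1 : ℤ) else 0) ≤ chiQ Q (al β S b) (al β S b) := by
    intro b hb
    have hb' := Finset.mem_range.1 hb
    by_cases h0 : al β S b = 0
    · have hn : b ∉ S i := by
        intro hbi
        have := congrFun h0 i
        simp only [al, hi, Nat.div_one, Pi.zero_apply, Nat.cast_eq_zero, Finset.card_eq_zero,
          Finset.filter_eq_empty_iff] at this
        exact this hbi rfl
      rw [if_neg hn, h0]
      simp [chiQ]
    · have := h2 _ (hsup b hb') h0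
      split_ifs <;> omega
  have hsum : ∑ b ∈ Finset.range (r + s), (if b ∈ S i then (1 : ℤ) else 0) = r := by
    rw [Finset.sum_ite_mem, Finset.inter_eq_right.2 hT]
    simp [(hS' i).2, hi]
  have hle := Finset.sum_le_sum hpos
  rw [hsum] at hle
  refine ⟨by omega, fun heq => ?_⟩
  have heq' : ∑ b ∈ Finset.range (r + s), (if b ∈ S i then (1 : ℤ) else 0) =
      ∑ b ∈ Finset.range (r + s), chiQ Q (al β S b) (al β S b) := by
    rw [hsum]; omega
  rw [Finset.sum_eq_sum_iff_of_le hpos] at heq'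
  funext v
  apply Finset.eq_of_subset_of_card_le
  · intro j hj
    have hj' := (hS' v).1 hj
    simp only [← add_mul] at hj'
    unfold preB
    refine Finset.mem_filter.2 ⟨hj', ?_⟩
    by_contra hn
    have hb := div_lt_of_lt_mul' (Finset.mem_range.1 hj')
    have h3 := heq' _ (Finset.mem_range.2 hb)
    rw [if_neg hn] at h3
    have h4 : al β S (j / β v) = 0 := by
      by_contra h0
      have := h2 _ (hsup _ hb) h0
      omega
    have h5 := congrFun h4 v
    simp only [al, Pi.zero_apply, Nat.cast_eq_zero, Finset.card_eq_zero,
          Finset.filter_eq_empty_iff] at h5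
    exact h5 hj rfl
  · rw [card_preB hT, (hS' v).2, (hS' i).2, hi, mul_one]

end

lemma spv_coeff (β : Fin n → ℕ) (p : Fin n × ℕ) :
    (spv β p).coeff 0 = ((p.2 / β p.1 : ℕ) : ℚ) := by
  simp [spv]

lemma uu_coeff_ne (β : Fin n → ℕ) (v : Fin n) {p q : ℕ} (h : p ≠ q) :
    (uu β (v, p) (v, q)).coeff 0 ≠ 0 := by
  unfold uu
  split_ifs with h1
  · simp only [Polynomial.coeff_C_zero]
    simp only at h1
    intro h2
    rw [sub_eq_zero, Nat.cast_inj] at h2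
    apply h
    rw [← Nat.div_add_mod p (β v), ← Nat.div_add_mod q (β v), h1, h2]
  · rw [Polynomial.coeff_sub, spv_coeff, spv_coeff]
    intro h2
    rw [sub_eq_zero, Nat.cast_inj] at h2
    exact h1 h2

lemma uu_coeff_of_ne (β : Fin n → ℕ) (p q : Fin n × ℕ) (h : p.2 / β p.1 ≠ q.2 / β q.1) :
    (uu β p q).coeff 0 = ((p.2 / β p.1 : ℕ) : ℚ) - ((q.2 / β q.1 : ℕ) : ℚ) := by
  unfold uu
  rw [if_neg h, Polynomial.coeff_sub, spv_coeff, spv_coeff]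

lemma coeff0_prod {ι : Type*} (s : Finset ι) (f : ι → Polynomial ℚ) :
    (∏ x ∈ s, f x).coeff 0 = ∏ x ∈ s, (f x).coeff 0 :=
  map_prod Polynomial.constantCoeff f s

lemma uuP_std (β : Fin n → ℕ) {N : ℕ} {T : Finset ℕ} (hT : T ⊆ Finset.range N) (v w : Fin n) :
    (uuP β v w (preB (β v) N (Finset.range N \ T) ×ˢ preB (β w) N T)).coeff 0 =
      (∏ b' ∈ Finset.range N \ T, ∏ b ∈ T, ((b' : ℚ) - b)) ^ (β v * β w) := by
  unfold uuP
  rw [coeff0_prod, Finset.prod_product]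
  have h1 : ∀ x ∈ preB (β v) N (Finset.range N \ T),
      ∏ y ∈ preB (β w) N T, (uu β (v, x) (w, y)).coeff 0 =
        (∏ b ∈ T, (((x / β v : ℕ) : ℚ) - b)) ^ β w := by
    intro x hx
    rw [← prod_preB hT (fun b => ((x / β v : ℕ) : ℚ) - b)]
    refine Finset.prod_congr rfl fun y hy => ?_
    rw [uu_coeff_of_ne]
    simp only
    intro h
    have h3 := (Finset.mem_filter.1 hx).2
    have h4 := (Finset.mem_filter.1 hy).2
    rw [h] at h3
    exact (Finset.mem_sdiff.1 h3).2 h4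
  rw [Finset.prod_congr rfl h1]
  rw [prod_preB Finset.sdiff_subset (fun c => (∏ b ∈ T, ((c : ℚ) - b)) ^ β w), Finset.prod_pow,
    ← pow_mul, mul_comm]

lemma sameP_std (β : Fin n → ℕ) {N : ℕ} {T : Finset ℕ} (v w : Fin n) :
    sameP β v w (preB (β v) N (Finset.range N \ T) ×ˢ preB (β w) N T) = 0 := by
  unfold sameP
  rw [Finset.card_eq_zero, Finset.filter_eq_empty_iff]
  intro x hx h
  rw [Finset.mem_product] at hx
  have h3 := (Finset.mem_filter.1 hx.1).2
  have h4 := (Finset.mem_filter.1 hx.2).2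
  rw [h] at h3
  exact (Finset.mem_sdiff.1 h3).2 h4

lemma compl_std (β : Fin n → ℕ) (r s : ℕ) (T : Finset ℕ) (v : Fin n) :
    shuffleCompl (fun v => r * β v) (fun v => s * β v) (fun v => preB (β v) (r + s) T) v =
      preB (β v) (r + s) (Finset.range (r + s) \ T) := by
  ext j
  simp only [shuffleCompl, preB, ← add_mul, Finset.mem_sdiff, Finset.mem_filter, Finset.mem_range]
  constructor
  · rintro ⟨h1, h2⟩
    exact ⟨h1, div_lt_of_lt_mul' h1, fun h => h2 ⟨h1, h⟩⟩
  · rintro ⟨h1, h2, h3⟩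
    exact ⟨h1, fun h => h3 h.2⟩

theorem partN_eq (Q : FinQuiver n) {β : Fin n → ℕ} {r s : ℕ} {i : Fin n}
    (hi : β i = 1) (h1 : chiQ Q (fun v => β v) (fun v => β v) = 1)
    (h2 : ∀ α : Fin n → ℤ, (∀ v, β v = 0 → α v = 0) → α ≠ 0 → 0 < chiQ Q α α)
    {T : Finset ℕ} (hT : T ⊆ Finset.range (r + s)) (hc : T.card = r) :
    partN Q (fun v => r * β v) (fun v => s * β v) i T =
      offD (Finset.univ.erase i) (fun v => r * β v + s * β v) := by
  have hexp : ∑ a : Q.Arr, β (Q.hd a) * β (Q.tl a) = ∑ v ∈ Finset.univ.erase i, β v * β v := by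
    unfold chiQ at h1
    rw [← Finset.add_sum_erase _ _ (Finset.mem_univ i)] at h1
    simp only [hi] at h1
    zify
    simp only [mul_comm ((β (Q.hd _) : ℕ) : ℤ)]
    push_cast at h1
    linarith
  obtain ⟨c, hcc⟩ := partN_const Q (fun v => r * β v) (fun v => s * β v) i T (by
    have e1 : ∑ a : Q.Arr, s * β (Q.hd a) * (r * β (Q.tl a)) =
        s * r * ∑ a : Q.Arr, β (Q.hd a) * β (Q.tl a) := by
      rw [Finset.mul_sum]
      exact Finset.sum_congr rfl fun _ _ => by ring
    have e2 : ∑ v ∈ Finset.univ.erase i, s * β v * (r * β v) =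
        s * r * ∑ v ∈ Finset.univ.erase i, β v * β v := by
      rw [Finset.mul_sum]
      exact Finset.sum_congr rfl fun _ _ => by ring
    rw [e1, e2, hexp])
  suffices hc1 : c = 1 by rw [hcc, hc1]; simp
  set S0 : Fin n → Finset ℕ := fun v => preB (β v) (r + s) T with hS0
  have hS0m : S0 ∈ shuffles (fun v => r * β v) (fun v => s * β v) := by
    rw [mem_shuffles]
    intro v
    refine ⟨?_, by simp only [hS0]; rw [card_preB hT, hc]⟩
    simp only [hS0, ← add_mul]
    exact Finset.filter_subset _ _
  have hS0i : S0 i = T := by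
    ext j
    simp only [hS0, preB, hi, Nat.div_one, mul_one, Finset.mem_filter]
    exact ⟨fun h => h.2, fun h => ⟨hT h, h⟩⟩
  set E := Finset.univ.erase i with hE
  set g1 : Fin n → ℕ := fun v => r * β v with hg1
  set g2 : Fin n → ℕ := fun v => s * β v with hg2
  let M : ℕ := ∑ v ∈ E, sameP β v v (Finset.range (g1 v + g2 v)).offDiag
  let restS : (Fin n → Finset ℕ) → ℕ := fun S => ∑ v ∈ E,
    sameP β v v ((Finset.range (g1 v + g2 v)).offDiag \ (shuffleCompl g1 g2 S v ×ˢ S v))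
  let uN : (Fin n → Finset ℕ) → Polynomial ℚ := fun S =>
    ∏ a, uuP β (Q.hd a) (Q.tl a) (shuffleCompl g1 g2 S (Q.hd a) ×ˢ S (Q.tl a))
  let uR : (Fin n → Finset ℕ) → Polynomial ℚ := fun S => ∏ v ∈ E,
    uuP β v v ((Finset.range (g1 v + g2 v)).offDiag \ (shuffleCompl g1 g2 S v ×ˢ S v))
  let uO : Polynomial ℚ := ∏ v ∈ E, uuP β v v (Finset.range (g1 v + g2 v)).offDiag
  have hM : ∀ S ∈ shuffles g1 g2, restS S + denSame β g1 g2 i S = M := by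
    intro S hS
    simp only [restS, denSame, M]
    rw [← hE, ← Finset.sum_add_distrib]
    refine Finset.sum_congr rfl fun v _ => ?_
    unfold sameP
    rw [← Finset.card_union_of_disjoint, ← Finset.filter_union,
      Finset.sdiff_union_of_subset (compl_prod_sub hS v)]
    exact Finset.disjoint_filter_filter Finset.sdiff_disjoint
  have hterm : ∀ S ∈ (shuffles g1 g2).filter (fun S => S i = T),
      (spec β (interactionNum Q g1 g2 S * restE E g1 g2 S)).coeff M =
        if S = S0 then (uN S).coeff 0 * (uR S).coeff 0 else 0 := by
    intro S hS
    rw [Finset.mem_filter] at hS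
    have hex : denSame β g1 g2 i S ≤ numSame Q β g1 g2 S ∧
        (numSame Q β g1 g2 S = denSame β g1 g2 i S →
          S = fun v => preB (β v) (r + s) (S i)) := excess_nonneg (Q := Q) hS.1 hi h1 h2
    have hMS := hM S hS.1
    have hform : spec β (interactionNum Q g1 g2 S * restE E g1 g2 S) =
        Polynomial.X ^ (numSame Q β g1 g2 S + restS S) * (uN S * uR S) := by
      rw [map_mul, spec_num]
      unfold restE
      rw [spec_vs, pow_add]
      simp only [numSame, restS, uN, uR]
      ring
    rw [hform, Polynomial.coeff_X_pow_mul']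
    split_ifs with ha hb hb
    · have : M - (numSame Q β g1 g2 S + restS S) = 0 := by
        have := hex.1; omega
      rw [this, Polynomial.mul_coeff_zero]
    · exfalso
      apply hb
      rw [hex.2 (by have := hex.1; omega), hS.2]
    · exfalso
      apply ha
      have hz : numSame Q β g1 g2 S = 0 := by
        unfold numSame
        refine Finset.sum_eq_zero fun a _ => ?_
        rw [hb, compl_std]
        exact sameP_std _ _ _
      omega
    · rfl
  have hO : spec β (offD E (fun v => g1 v + g2 v)) = Polynomial.X ^ M * uO := by
    unfold offD
    rw [spec_vs]
  have hO0 : uO.coeff 0 ≠ 0 := by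
    simp only [uO, uuP]
    rw [coeff0_prod, Finset.prod_ne_zero_iff]
    intro v _
    rw [coeff0_prod, Finset.prod_ne_zero_iff]
    intro x hx
    exact uu_coeff_ne _ _ (Finset.mem_offDiag.1 hx).2.2
  have hOR : uO.coeff 0 = (uN S0).coeff 0 * (uR S0).coeff 0 := by
    have h3 : uO = (∏ v ∈ E, uuP β v v (shuffleCompl g1 g2 S0 v ×ˢ S0 v)) * uR S0 := by
      simp only [uO, uR]
      rw [← Finset.prod_mul_distrib]
      refine Finset.prod_congr rfl fun v _ => ?_
      unfold uuP
      rw [mul_comm, Finset.prod_sdiff (compl_prod_sub hS0m v)]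
    rw [h3, Polynomial.mul_coeff_zero]
    congr 1
    simp only [uN]
    rw [coeff0_prod, coeff0_prod]
    have e1 : ∀ v w, (uuP β v w (shuffleCompl g1 g2 S0 v ×ˢ S0 w)).coeff 0 =
        (∏ b' ∈ Finset.range (r + s) \ T, ∏ b ∈ T, ((b' : ℚ) - b)) ^ (β v * β w) := by
      intro v w
      rw [hS0, compl_std]
      exact uuP_std β hT v w
    simp only [e1]
    rw [Finset.prod_pow_eq_pow_sum, Finset.prod_pow_eq_pow_sum, hexp]
  have hfin := congrArg (fun p => (spec β p).coeff M) hcc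
  simp only [map_mul] at hfin
  have hO' : spec β (offD E (fun v => r * β v + s * β v)) = Polynomial.X ^ M * uO := hO
  rw [hO'] at hfin
  unfold partN at hfin
  rw [map_sum, Polynomial.finsetSum_coeff, Finset.sum_congr rfl hterm, Finset.sum_ite_eq',
    if_pos (Finset.mem_filter.2 ⟨hS0m, hS0i⟩), ← hOR] at hfin
  have hC : spec β (C c) = Polynomial.C c := by
    unfold spec; rw [aeval_C]; rfl
  rw [hC, Polynomial.coeff_mul_C, Polynomial.coeff_X_pow_mul', if_pos le_rfl, Nat.sub_self] at hfin
  have h5 : uO.coeff 0 * (c - 1) = 0 := by rw [mul_sub, ← hfin]; ring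
  rcases mul_eq_zero.1 h5 with h | h
  · exact absurd h hO0
  · linarith

lemma rename_famPerm_of_symm {γ : Fin n → ℕ} {g : PolyQ n} (hg : SymmIn γ g)
    (σ : Fin n → Equiv.Perm ℕ) (hσ : ∀ v j, σ v j ≠ j → j < γ v) :
    rename (famPerm σ) g = g := by
  have key : ∀ Vs : Finset (Fin n),
      rename (famPerm (fun v => if v ∈ Vs then σ v else 1)) g = g := by
    intro Vs
    induction Vs using Finset.induction_on with
    | empty =>
      have : famPerm (fun v : Fin n => if v ∈ (∅ : Finset (Fin n)) then σ v else 1) = id := by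
        funext ⟨v, j⟩
        simp [famPerm]
      rw [this, rename_id_apply]
    | insert a Vs ha ih =>
      have : famPerm (fun v : Fin n => if v ∈ insert a Vs then σ v else 1) =
          vertexPerm a (σ a) ∘ famPerm (fun v => if v ∈ Vs then σ v else 1) := by
        funext ⟨v, j⟩
        simp only [famPerm, vertexPerm, Function.comp_apply, Finset.mem_insert]
        by_cases h : v = a
        · subst h
          simp [ha]
        · simp [h]
      rw [this, ← rename_rename, ih, hg a (σ a) (hσ a)]
  simpa using key Finset.univ

lemma exists_perm {N : ℕ} {e1 e2 : ℕ → ℕ} {I : Set ℕ} (h1 : Set.BijOn e1 (Set.Iio N) I)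
    (h2 : Set.BijOn e2 (Set.Iio N) I) :
    ∃ σ : Equiv.Perm ℕ, (∀ j, σ j ≠ j → j < N) ∧ ∀ j < N, e2 (σ j) = e1 j := by
  let s : Equiv.Perm (Set.Iio N) := (h1.equiv e1).trans (h2.equiv e2).symm
  refine ⟨Equiv.Perm.ofSubtype (p := fun j => j ∈ Set.Iio N) s, ?_, ?_⟩
  · intro j hj
    by_contra h
    exact hj (Equiv.Perm.ofSubtype_apply_of_not_mem _ h)
  · intro j hj
    rw [Equiv.Perm.ofSubtype_apply_of_mem (p := fun j => j ∈ Set.Iio N) s hj]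
    have : (h2.equiv e2) (s ⟨j, hj⟩) = (h1.equiv e1) ⟨j, hj⟩ := by
      simp [s]
    exact congrArg Subtype.val this

def mapE (e : Fin n → ℕ → ℕ) (p : Fin n × ℕ) : Fin n × ℕ := (p.1, e p.1 p.2)

lemma rename_congr_vars {g : PolyQ n} {m : ℕ} {f1 f2 : Fin n × ℕ → Fin m × ℕ}
    (h : ∀ p ∈ g.vars, f1 p = f2 p) : rename f1 g = rename f2 g := by
  rw [rename_eq_aeval, rename_eq_aeval]
  apply eval₂Hom_congr' rfl _ rfl
  intro p hp _
  simp [h p hp]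

lemma rename_eq_of_bij {γ : Fin n → ℕ} {g : PolyQ n} (hg : g ∈ Hspace γ) {e1 e2 : Fin n → ℕ → ℕ}
    {I : Fin n → Set ℕ} (h1 : ∀ v, Set.BijOn (e1 v) (Set.Iio (γ v)) (I v))
    (h2 : ∀ v, Set.BijOn (e2 v) (Set.Iio (γ v)) (I v)) :
    rename (mapE e1) g = rename (mapE e2) g := by
  choose σ hσ1 hσ2 using fun v => exists_perm (h1 v) (h2 v)
  have h3 := rename_famPerm_of_symm hg.2 σ hσ1
  conv_rhs => rw [← h3, rename_rename]
  apply rename_congr_vars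
  intro p hp
  simp only [mapE, famPerm, Function.comp_apply]
  rw [hσ2 _ _ (hg.1 p hp)]

def srt (S : Fin n → Finset ℕ) (v : Fin n) (j : ℕ) : ℕ := ((S v).sort (· ≤ ·)).getD j 0

lemma substAlong_eq (S : Fin n → Finset ℕ) (g : PolyQ n) :
    substAlong S g = rename (mapE (srt S)) g := by
  rw [rename_eq_aeval]
  rfl

lemma srt_bij (S : Fin n → Finset ℕ) (v : Fin n) :
    Set.BijOn (srt S v) (Set.Iio (S v).card) (S v : Set ℕ) := by
  have hl : ((S v).sort (· ≤ ·)).length = (S v).card := Finset.length_sort _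
  refine ⟨?_, ?_, ?_⟩
  · intro j hj
    have hj' : j < ((S v).sort (· ≤ ·)).length := by rw [hl]; exact hj
    unfold srt
    rw [List.getD_eq_getElem _ _ hj']
    exact Finset.mem_coe.2 ((Finset.mem_sort _).1 (List.getElem_mem hj'))
  · intro j hj k hk h
    have hj' : j < ((S v).sort (· ≤ ·)).length := by rw [hl]; exact hj
    have hk' : k < ((S v).sort (· ≤ ·)).length := by rw [hl]; exact hk
    unfold srt at h
    rw [List.getD_eq_getElem _ _ hj', List.getD_eq_getElem _ _ hk'] at h
    exact (List.Nodup.getElem_inj_iff (Finset.sort_nodup _ _)).1 h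
  · intro x hx
    have := (Finset.mem_sort (· ≤ ·)).2 (Finset.mem_coe.1 hx)
    obtain ⟨j, hj, rfl⟩ := List.getElem_of_mem this
    refine ⟨j, by rw [Set.mem_Iio, ← hl]; exact hj, ?_⟩
    unfold srt
    rw [List.getD_eq_getElem _ _ hj]

lemma rename_substAlong {γ : Fin n → ℕ} {g : PolyQ n} (hg : g ∈ Hspace γ)
    {S : Fin n → Finset ℕ} (hS : ∀ v, (S v).card = γ v) (τ : Fin n → Equiv.Perm ℕ) :
    rename (famPerm τ) (substAlong S g) = substAlong (mapS τ S) g := by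
  rw [substAlong_eq, substAlong_eq, rename_rename]
  have : famPerm τ ∘ mapE (srt S) = mapE (fun v j => τ v (srt S v j)) := by
    funext p; rfl
  rw [this]
  apply rename_eq_of_bij hg (I := fun v => (mapS τ S v : Set ℕ))
  · intro v
    have h1 := srt_bij S v
    rw [hS v] at h1
    have h2 : Set.BijOn (τ v) (S v : Set ℕ) (mapS τ S v : Set ℕ) := by
      unfold mapS
      rw [Finset.coe_map]
      exact (τ v).injective.injOn.bijOn_image
    exact h2.comp h1
  · intro v
    have h1 := srt_bij (mapS τ S) v
    have : (mapS τ S v).card = γ v := by rw [mapS, Finset.card_map, hS]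
    rwa [this] at h1

lemma interactionDen_eq (γ₁ γ₂ : Fin n → ℕ) (S : Fin n → Finset ℕ) :
    interactionDen γ₁ γ₂ S = denV Finset.univ γ₁ γ₂ S := by
  unfold interactionDen denV
  refine Finset.prod_congr rfl fun v _ => ?_
  rw [Finset.prod_product]

lemma card_compl {γ₁ γ₂ : Fin n → ℕ} {S : Fin n → Finset ℕ} (hS : S ∈ shuffles γ₁ γ₂) (v : Fin n) :
    (shuffleCompl γ₁ γ₂ S v).card = γ₂ v := by
  have hS' := mem_shuffles.1 hS
  rw [shuffleCompl, Finset.card_sdiff_of_subset (hS' v).1, (hS' v).2, Finset.card_range]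
  omega

noncomputable def totN (Q : FinQuiver n) (γ₁ γ₂ : Fin n → ℕ) (f₁ f₂ : PolyQ n) : PolyQ n :=
  ∑ S ∈ shuffles γ₁ γ₂, substAlong S f₁ * substAlong (shuffleCompl γ₁ γ₂ S) f₂ *
    interactionNum Q γ₁ γ₂ S * restE Finset.univ γ₁ γ₂ S

lemma rename_totN (Q : FinQuiver n) {γ₁ γ₂ : Fin n → ℕ} {f₁ f₂ : PolyQ n} (h1 : f₁ ∈ Hspace γ₁)
    (h2 : f₂ ∈ Hspace γ₂) {τ : Fin n → Equiv.Perm ℕ} (hP : Pres γ₁ γ₂ τ) :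
    rename (famPerm τ) (totN Q γ₁ γ₂ f₁ f₂) = totN Q γ₁ γ₂ f₁ f₂ := by
  unfold totN
  rw [map_sum]
  refine Finset.sum_bij' (fun S _ => mapS τ S) (fun S _ => mapS (fun v => (τ v)⁻¹) S) ?_ ?_ ?_ ?_ ?_
  · intro S hS
    exact mapS_mem hP hS
  · intro S hS
    exact mapS_mem hP.inv hS
  · intro S _; exact mapS_inv_mapS _ _
  · intro S _; exact mapS_mapS_inv _ _
  · intro S hS
    rw [map_mul, map_mul, map_mul, rename_num Q hP, rename_restE _ hP,
      rename_substAlong h1 (fun v => (mem_shuffles.1 hS v).2),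
      rename_substAlong h2 (card_compl hS), mapS_compl hP]

lemma pres_of_supp {γ₁ γ₂ : Fin n → ℕ} {v : Fin n} {σ : Equiv.Perm ℕ}
    (h : ∀ j, σ j ≠ j → j < γ₁ v + γ₂ v) : Pres γ₁ γ₂ (fun w => if w = v then σ else 1) := by
  intro w j
  simp only
  split_ifs with hw
  · subst hw
    by_cases hj : σ j = j
    · rw [hj]
    · refine iff_of_true (h _ ?_) (h _ hj)
      intro h2
      exact hj (σ.injective h2)
  · rfl

lemma vars_dvd {f g : PolyQ n} (hg : g ≠ 0) (h : f ∣ g) : f.vars ⊆ g.vars := by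
  obtain ⟨c, rfl⟩ := h
  intro p hp
  have hf : f ≠ 0 := fun h => hg (by rw [h, zero_mul])
  have hc : c ≠ 0 := fun h => hg (by rw [h, mul_zero])
  by_contra hn
  rw [mem_vars_iff_degreeOf_ne_zero, degreeOf_mul_eq hf hc] at hn
  rw [mem_vars_iff_degreeOf_ne_zero] at hp
  omega

theorem coha_poly (Q : FinQuiver n) {γ₁ γ₂ : Fin n → ℕ} {f₁ f₂ : PolyQ n} (h1 : f₁ ∈ Hspace γ₁)
    (h2 : f₂ ∈ Hspace γ₂) : ∃ P ∈ Hspace (fun v => γ₁ v + γ₂ v),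
      algebraMap (PolyQ n) (FractionRing (PolyQ n)) P = cohaMulRat Q γ₁ γ₂ f₁ f₂ := by
  have hdvd : offD Finset.univ (fun v => γ₁ v + γ₂ v) ∣ totN Q γ₁ γ₂ f₁ f₂ := by
    apply offD_dvd
    · intro v hv p hp q hq hpq
      rw [vertexPerm_eq_fam]
      apply rename_totN Q h1 h2
      apply pres_of_supp
      intro j hj
      by_contra hn
      apply hj
      apply Equiv.swap_apply_of_ne_of_ne
      · rintro rfl; exact hn hp
      · rintro rfl; exact hn hq
    · intro v hv p hp q hq hpq
      exact Finset.dvd_sum fun S _ => (dvd_restE _ _ _ _ hv hp hq hpq).mul_left _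
  obtain ⟨P, hP⟩ := hdvd
  set D := offD (n := n) Finset.univ (fun v => γ₁ v + γ₂ v) with hD
  have hD0 : D ≠ 0 := offD_ne_zero _ _
  refine ⟨P, ⟨?_, ?_⟩, ?_⟩
  · by_cases hP0 : P = 0
    · rw [hP0]; simp
    have hN0 : totN Q γ₁ γ₂ f₁ f₂ ≠ 0 := by rw [hP]; exact mul_ne_zero hD0 hP0
    have hv := vars_dvd hN0 ⟨D, by rw [hP, mul_comm]⟩
    have hs : totN Q γ₁ γ₂ f₁ f₂ ∈ supported ℚ {p : Fin n × ℕ | p.2 < γ₁ p.1 + γ₂ p.1} := by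
      have hsub : ∀ (U : Fin n → Finset ℕ) (γ : Fin n → ℕ) (f : PolyQ n), f ∈ Hspace γ →
          (∀ v, (U v).card = γ v) → (∀ v, U v ⊆ Finset.range (γ₁ v + γ₂ v)) →
          substAlong U f ∈ supported ℚ {p : Fin n × ℕ | p.2 < γ₁ p.1 + γ₂ p.1} := by
        intro U γ f hf hc hU
        rw [substAlong_eq, mem_supported]
        intro p hp
        obtain ⟨q, hq, rfl⟩ := Finset.mem_image.1 (vars_rename _ _ hp)
        have := (srt_bij U q.1).mapsTo (x := q.2) (by rw [hc]; exact hf.1 q hq)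
        exact Finset.mem_range.1 (hU _ this)
      have hX : ∀ (v : Fin n) (j : ℕ), j ∈ Finset.range (γ₁ v + γ₂ v) →
          (X (v, j) : PolyQ n) ∈ supported ℚ {p : Fin n × ℕ | p.2 < γ₁ p.1 + γ₂ p.1} := by
        intro v j hj
        rw [X_mem_supported]
        exact Finset.mem_range.1 hj
      unfold totN
      refine sum_mem fun S hS => mul_mem (mul_mem (mul_mem ?_ ?_) ?_) ?_
      · exact hsub _ _ _ h1 (fun v => (mem_shuffles.1 hS v).2) (fun v => (mem_shuffles.1 hS v).1)
      · exact hsub _ _ _ h2 (card_compl hS) (fun v => Finset.sdiff_subset)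
      · refine prod_mem fun a _ => prod_mem fun j' hj' => prod_mem fun j hj => sub_mem ?_ ?_
        · exact hX _ _ (Finset.sdiff_subset hj')
        · exact hX _ _ ((mem_shuffles.1 hS _).1 hj)
      · refine prod_mem fun v _ => prod_mem fun x hx => sub_mem ?_ ?_
        · exact hX _ _ (Finset.mem_offDiag.1 (Finset.sdiff_subset hx)).1
        · exact hX _ _ (Finset.mem_offDiag.1 (Finset.sdiff_subset hx)).2.1
    rw [mem_supported] at hs
    intro p hp
    exact hs (hv hp)
  · intro v σ hσ
    have hpres := pres_of_supp hσ
    have e := rename_totN Q h1 h2 hpres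
    rw [hP, map_mul, hD, rename_offD _ hpres, ← vertexPerm_eq_fam] at e
    exact mul_left_cancel₀ hD0 e
  · have hinj := FaithfulSMul.algebraMap_injective (PolyQ n) (FractionRing (PolyQ n))
    have hAD : algebraMap (PolyQ n) (FractionRing (PolyQ n)) D ≠ 0 := by
      rw [ne_eq, map_eq_zero_iff _ hinj]; exact hD0
    apply mul_left_cancel₀ hAD
    rw [← map_mul, ← hP]
    unfold totN cohaMulRat
    rw [map_sum, Finset.mul_sum]
    refine Finset.sum_congr rfl fun S hS => ?_
    have hd := denV_mul_restE Finset.univ hS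
    have hd0 : algebraMap (PolyQ n) (FractionRing (PolyQ n)) (denV Finset.univ γ₁ γ₂ S) ≠ 0 := by
      rw [ne_eq, map_eq_zero_iff _ hinj]; exact denV_ne_zero _ hS
    rw [interactionDen_eq, hD, ← hd, map_mul _ (_ * _) (restE _ _ _ _), map_mul _ (denV _ _ _ _)]
    field_simp

lemma cohaMul_eq_of {Q : FinQuiver n} {γ₁ γ₂ : Fin n → ℕ} {f₁ f₂ P : PolyQ n}
    (h : algebraMap (PolyQ n) (FractionRing (PolyQ n)) P = cohaMulRat Q γ₁ γ₂ f₁ f₂) :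
    cohaMul Q γ₁ γ₂ f₁ f₂ = P := by
  have hex : ∃ P : PolyQ n,
      algebraMap (PolyQ n) (FractionRing (PolyQ n)) P = cohaMulRat Q γ₁ γ₂ f₁ f₂ := ⟨P, h⟩
  unfold cohaMul
  rw [dif_pos hex]
  apply FaithfulSMul.algebraMap_injective (PolyQ n) (FractionRing (PolyQ n))
  rw [hex.choose_spec, h]

lemma cohaMul_spec (Q : FinQuiver n) {γ₁ γ₂ : Fin n → ℕ} {f₁ f₂ : PolyQ n} (h1 : f₁ ∈ Hspace γ₁)
    (h2 : f₂ ∈ Hspace γ₂) : cohaMul Q γ₁ γ₂ f₁ f₂ ∈ Hspace (fun v => γ₁ v + γ₂ v) ∧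
      algebraMap (PolyQ n) (FractionRing (PolyQ n)) (cohaMul Q γ₁ γ₂ f₁ f₂) =
        cohaMulRat Q γ₁ γ₂ f₁ f₂ := by
  obtain ⟨P, hP, h⟩ := coha_poly Q h1 h2
  rw [cohaMul_eq_of h]
  exact ⟨hP, h⟩

noncomputable def iot (i : Fin n) : PolyQ 1 →ₐ[ℚ] PolyQ n :=
  rename (fun p : Fin 1 × ℕ => (i, p.2))

lemma iot_inj (i : Fin n) : Function.Injective (iot i) := by
  apply rename_injective
  rintro ⟨a, b⟩ ⟨c, d⟩ h
  simp only [Prod.mk.injEq, true_and] at h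
  exact Prod.ext (Subsingleton.elim _ _) h

lemma subst_iot (i : Fin n) (S : Fin n → Finset ℕ) (S' : Fin 1 → Finset ℕ) (h : S i = S' 0)
    (g : PolyQ 1) : substAlong S (iot i g) = iot i (substAlong S' g) := by
  rw [substAlong_eq, substAlong_eq]
  unfold iot
  rw [rename_rename, rename_rename]
  congr 2
  funext ⟨a, j⟩
  have : a = 0 := Subsingleton.elim _ _
  subst this
  simp only [mapE, srt, Function.comp_apply, h]

lemma fracI_inj (i : Fin n) : Function.Injective
    ((algebraMap (PolyQ n) (FractionRing (PolyQ n))).comp (iot i : PolyQ 1 →+* PolyQ n)) := by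
  intro a b h
  exact iot_inj i (FaithfulSMul.algebraMap_injective (PolyQ n) (FractionRing (PolyQ n)) h)

noncomputable def fracI (i : Fin n) : FractionRing (PolyQ 1) →+* FractionRing (PolyQ n) :=
  IsFractionRing.lift (fracI_inj i)

lemma fracI_alg (i : Fin n) (p : PolyQ 1) :
    fracI i (algebraMap (PolyQ 1) (FractionRing (PolyQ 1)) p) =
      algebraMap (PolyQ n) (FractionRing (PolyQ n)) (iot i p) :=
  IsFractionRing.lift_algebraMap (fracI_inj i) p

theorem rat_eq (Q : FinQuiver n) {β : Fin n → ℕ} {r s : ℕ} {i : Fin n}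
    (hi : β i = 1) (h1 : chiQ Q (fun v => β v) (fun v => β v) = 1)
    (h2 : ∀ α : Fin n → ℤ, (∀ v, β v = 0 → α v = 0) → α ≠ 0 → 0 < chiQ Q α α)
    (g₁ g₂ : PolyQ 1) :
    cohaMulRat Q (fun v => r * β v) (fun v => s * β v) (iot i g₁) (iot i g₂) =
      fracI i (cohaMulRat A1 (fun _ => r) (fun _ => s) g₁ g₂) := by
  set A := algebraMap (PolyQ n) (FractionRing (PolyQ n)) with hA
  have hinj : Function.Injective A :=
    FaithfulSMul.algebraMap_injective (PolyQ n) (FractionRing (PolyQ n))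
  unfold cohaMulRat
  rw [map_sum]
  have hmap : ∀ S ∈ shuffles (fun v => r * β v) (fun v => s * β v),
      (fun _ : Fin 1 => S i) ∈ shuffles (fun _ : Fin 1 => r) (fun _ => s) := by
    intro S hS
    rw [mem_shuffles] at *
    intro _
    have := hS i
    simpa [hi] using this
  rw [← Finset.sum_fiberwise_of_maps_to (g := fun S (_ : Fin 1) => S i) hmap]
  refine Finset.sum_congr rfl fun T hT => ?_
  have hT' := mem_shuffles.1 hT 0
  set z : FractionRing (PolyQ n) := fracI i (algebraMap (PolyQ 1) (FractionRing (PolyQ 1))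
    (substAlong T g₁ * substAlong (shuffleCompl (fun _ => r) (fun _ => s) T) g₂ *
      interactionNum A1 (fun _ => r) (fun _ => s) T) /
    algebraMap (PolyQ 1) (FractionRing (PolyQ 1)) (interactionDen (fun _ => r) (fun _ => s) T)) with hz
  have hterm : ∀ S ∈ (shuffles (fun v => r * β v) (fun v => s * β v)).filter
      (fun S => (fun _ : Fin 1 => S i) = T),
      A (substAlong S (iot i g₁) *
        substAlong (shuffleCompl (fun v => r * β v) (fun v => s * β v) S) (iot i g₂) *
        interactionNum Q (fun v => r * β v) (fun v => s * β v) S) /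
      A (interactionDen (fun v => r * β v) (fun v => s * β v) S) =
      z * (A (interactionNum Q (fun v => r * β v) (fun v => s * β v) S *
        restE (Finset.univ.erase i) (fun v => r * β v) (fun v => s * β v) S) /
        A (offD (Finset.univ.erase i) (fun v => r * β v + s * β v))) := by
    intro S hS
    rw [Finset.mem_filter] at hS
    have hSi : S i = T 0 := congrFun hS.2 0
    rw [subst_iot i S T hSi, subst_iot i _ (shuffleCompl (fun _ => r) (fun _ => s) T) (by
      simp only [shuffleCompl, hi, mul_one, hSi])]
    have hden : interactionDen (fun v => r * β v) (fun v => s * β v) S =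
        iot i (interactionDen (fun _ => r) (fun _ => s) T) *
          denV (Finset.univ.erase i) (fun v => r * β v) (fun v => s * β v) S := by
      rw [interactionDen_eq, interactionDen_eq]
      unfold denV
      rw [← Finset.mul_prod_erase _ _ (Finset.mem_univ i)]
      congr 1
      rw [Fin.prod_univ_one, map_prod]
      have : shuffleCompl (fun v => r * β v) (fun v => s * β v) S i =
          shuffleCompl (fun _ => r) (fun _ => s) T 0 := by
        simp only [shuffleCompl, hi, mul_one, hSi]
      rw [this, hSi]
      refine Finset.prod_congr rfl fun x _ => ?_
      simp [iot]
    have hnum : interactionNum A1 (fun _ => r) (fun _ => s) T = 1 := by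
      unfold interactionNum
      apply Finset.prod_eq_one
      intro a
      exact Empty.elim a
    rw [hden, hz, map_div₀, fracI_alg, fracI_alg, hnum, mul_one,
      ← denV_mul_restE (Finset.univ.erase i) hS.1]
    simp only [map_mul, ← hA]
    have n1 : A (denV (Finset.univ.erase i) (fun v => r * β v) (fun v => s * β v) S) ≠ 0 := by
      rw [ne_eq, map_eq_zero_iff _ hinj]; exact denV_ne_zero _ hS.1
    have n2 : A (restE (Finset.univ.erase i) (fun v => r * β v) (fun v => s * β v) S) ≠ 0 := by
      rw [ne_eq, map_eq_zero_iff _ hinj]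
      intro h0
      have := denV_mul_restE (Finset.univ.erase i) hS.1
      rw [h0, mul_zero] at this
      exact offD_ne_zero _ _ this.symm
    have n3 : A (iot i (interactionDen (fun _ => r) (fun _ => s) T)) ≠ 0 := by
      rw [ne_eq, map_eq_zero_iff _ hinj, map_eq_zero_iff _ (iot_inj i), interactionDen_eq]
      exact denV_ne_zero _ hT
    field_simp
  rw [Finset.sum_congr rfl hterm, ← Finset.mul_sum, ← Finset.sum_div, ← map_sum]
  have hfilt : (shuffles (fun v => r * β v) (fun v => s * β v)).filter
      (fun S => (fun _ : Fin 1 => S i) = T) =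
      (shuffles (fun v => r * β v) (fun v => s * β v)).filter (fun S => S i = T 0) := by
    apply Finset.filter_congr
    intro S _
    constructor
    · intro h; exact congrFun h 0
    · intro h
      funext x
      rw [Subsingleton.elim x 0, h]
  rw [hfilt]
  have hk := partN_eq (r := r) (s := s) Q hi h1 h2 hT'.1 hT'.2
  unfold partN at hk
  rw [hk, div_self, mul_one]
  rw [ne_eq, map_eq_zero_iff _ hinj]
  exact offD_ne_zero _ _

theorem mul_eq (Q : FinQuiver n) {β : Fin n → ℕ} {r s : ℕ} {i : Fin n}
    (hi : β i = 1) (h1 : chiQ Q (fun v => β v) (fun v => β v) = 1)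
    (h2 : ∀ α : Fin n → ℤ, (∀ v, β v = 0 → α v = 0) → α ≠ 0 → 0 < chiQ Q α α)
    {g₁ g₂ : PolyQ 1} (hg₁ : g₁ ∈ Hspace (fun _ => r)) (hg₂ : g₂ ∈ Hspace (fun _ => s)) :
    iot i (cohaMul A1 (fun _ => r) (fun _ => s) g₁ g₂) =
      cohaMul Q (fun v => r * β v) (fun v => s * β v) (iot i g₁) (iot i g₂) := by
  symm
  apply cohaMul_eq_of
  rw [rat_eq Q hi h1 h2, ← (cohaMul_spec A1 hg₁ hg₂).2, fracI_alg]

lemma cohaProd_snoc (Q : FinQuiver n) (l : List ((Fin n → ℕ) × PolyQ n)) (hl : l ≠ [])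
    (y : (Fin n → ℕ) × PolyQ n) :
    cohaProd Q (l ++ [y]) = ((cohaProd Q l).1 + y.1,
      cohaMul Q (cohaProd Q l).1 y.1 (cohaProd Q l).2 y.2) := by
  cases l with
  | nil => exact absurd rfl hl
  | cons x xs =>
    simp [cohaProd, List.foldl_append]

lemma cohaProd_fst (Q : FinQuiver n) (β : Fin n → ℕ) : ∀ (r : ℕ) (f : Fin r → PolyQ n),
    (cohaProd Q (List.ofFn fun u => (β, f u))).1 = fun v => r * β v := by
  intro r
  induction r with
  | zero => intro f; simp [cohaProd]
  | succ r ih =>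
    intro f
    rcases Nat.eq_zero_or_pos r with rfl | hr
    · simp [cohaProd]
    rw [List.ofFn_succ', List.concat_eq_append, cohaProd_snoc]
    · simp only [ih]
      funext v
      simp only [Pi.add_apply]
      ring
    · rw [ne_eq, List.ofFn_eq_nil_iff]; omega

lemma cohaProdFin_snoc (Q : FinQuiver n) (β : Fin n → ℕ) {r : ℕ} (hr : 0 < r)
    (f : Fin (r + 1) → PolyQ n) :
    cohaProdFin Q (fun _ => β) f = cohaMul Q (fun v => r * β v) β
      (cohaProdFin Q (fun _ => β) (fun u : Fin r => f u.castSucc)) (f (Fin.last r)) := by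
  unfold cohaProdFin
  rw [List.ofFn_succ', List.concat_eq_append, cohaProd_snoc]
  · simp only [cohaProd_fst]
  · rw [ne_eq, List.ofFn_eq_nil_iff]; omega

noncomputable def pA (r : ℕ) (f : Fin r → Polynomial ℚ) : PolyQ 1 :=
  cohaProdFin A1 (fun _ => oneDim) (fun u => Polynomial.aeval (X ((0 : Fin 1), 0) : PolyQ 1) (f u))

lemma X_pow_mem (k : ℕ) : (X ((0 : Fin 1), 0) ^ k : PolyQ 1) ∈ Hspace (fun _ : Fin 1 => 1) := by
  refine ⟨?_, ?_⟩
  · have h : (X ((0 : Fin 1), 0) ^ k : PolyQ 1) ∈ supported ℚ {p : Fin 1 × ℕ | p.2 < 1} := by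
      apply pow_mem
      rw [X_mem_supported]
      simp
    rw [mem_supported] at h
    intro p hp
    exact h hp
  · intro v σ hσ
    have : σ 0 = 0 := by
      by_contra h
      have h1 : σ 0 < 1 := hσ (σ 0) (fun h2 => h (σ.injective h2))
      omega
    rw [map_pow, rename_X]
    congr 2
    unfold vertexPerm
    simp [this, Subsingleton.elim v 0]

lemma aeval_mem (f : Polynomial ℚ) :
    Polynomial.aeval (X ((0 : Fin 1), 0) : PolyQ 1) f ∈ Hspace (fun _ : Fin 1 => 1) := by
  rw [Polynomial.aeval_eq_sum_range]
  exact sum_mem fun k _ => Submodule.smul_mem _ _ (X_pow_mem k)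

lemma one_mem_H (γ : Fin n → ℕ) : (1 : PolyQ n) ∈ Hspace γ := by
  refine ⟨?_, fun _ _ _ => map_one _⟩
  simp

lemma pA_zero (f : Fin 0 → Polynomial ℚ) : pA 0 f = 1 := by
  simp [pA, cohaProdFin, cohaProd]

lemma pA_one (f : Fin 1 → Polynomial ℚ) :
    pA 1 f = Polynomial.aeval (X ((0 : Fin 1), 0) : PolyQ 1) (f 0) := by
  simp [pA, cohaProdFin, cohaProd]

lemma pA_succ {r : ℕ} (hr : 0 < r) (f : Fin (r + 1) → Polynomial ℚ) :
    pA (r + 1) f = cohaMul A1 (fun _ => r) (fun _ => 1) (pA r fun u => f u.castSucc)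
      (Polynomial.aeval (X ((0 : Fin 1), 0) : PolyQ 1) (f (Fin.last r))) := by
  unfold pA
  rw [cohaProdFin_snoc _ _ hr]
  simp only [oneDim, mul_one]
  rfl

lemma pA_mem (r : ℕ) : ∀ f : Fin r → Polynomial ℚ, pA r f ∈ Hspace (fun _ : Fin 1 => r) := by
  induction r with
  | zero => intro f; rw [pA_zero]; exact one_mem_H _
  | succ r ih =>
    intro f
    rcases Nat.eq_zero_or_pos r with rfl | hr
    · rw [pA_one]; exact aeval_mem _
    · rw [pA_succ hr]
      exact (cohaMul_spec A1 (ih _) (aeval_mem _)).1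

lemma iot_aeval (i : Fin n) (f : Polynomial ℚ) :
    iot i (Polynomial.aeval (X ((0 : Fin 1), 0) : PolyQ 1) f) =
      Polynomial.aeval (X (i, 0) : PolyQ n) f := by
  rw [← Polynomial.aeval_algHom_apply]
  congr 2
  simp [iot]

lemma prod_eq_pA (Q : FinQuiver n) {β : Fin n → ℕ} {i : Fin n}
    (hi : β i = 1) (h1 : chiQ Q (fun v => β v) (fun v => β v) = 1)
    (h2 : ∀ α : Fin n → ℤ, (∀ v, β v = 0 → α v = 0) → α ≠ 0 → 0 < chiQ Q α α) (r : ℕ) :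
    ∀ f : Fin r → Polynomial ℚ, cohaProdFin Q (fun _ => β)
      (fun u => Polynomial.aeval (X (i, 0) : PolyQ n) (f u)) = iot i (pA r f) := by
  induction r with
  | zero => intro f; rw [pA_zero, map_one]; simp [cohaProdFin, cohaProd]
  | succ r ih =>
    intro f
    rcases Nat.eq_zero_or_pos r with rfl | hr
    · rw [pA_one, iot_aeval]; simp [cohaProdFin, cohaProd]
    · rw [cohaProdFin_snoc _ _ hr, ih (fun u => f u.castSucc), pA_succ hr,
        mul_eq Q hi h1 h2 (pA_mem _ _) (aeval_mem _), iot_aeval]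
      congr 1
      funext v
      rw [one_mul]

lemma coha_add {r s : ℕ} {a b g : PolyQ 1} (ha : a ∈ Hspace (fun _ : Fin 1 => r))
    (hb : b ∈ Hspace (fun _ : Fin 1 => r)) (hg : g ∈ Hspace (fun _ : Fin 1 => s)) :
    cohaMul A1 (fun _ => r) (fun _ => s) (a + b) g =
      cohaMul A1 (fun _ => r) (fun _ => s) a g + cohaMul A1 (fun _ => r) (fun _ => s) b g := by
  apply cohaMul_eq_of
  rw [map_add, (cohaMul_spec A1 ha hg).2, (cohaMul_spec A1 hb hg).2]
  unfold cohaMulRat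
  rw [← Finset.sum_add_distrib]
  refine Finset.sum_congr rfl fun S _ => ?_
  rw [← add_div, ← map_add, map_add (substAlong S)]
  congr 2
  ring

lemma coha_smul {r s : ℕ} (c : ℚ) {a g : PolyQ 1} (ha : a ∈ Hspace (fun _ : Fin 1 => r))
    (hg : g ∈ Hspace (fun _ : Fin 1 => s)) :
    cohaMul A1 (fun _ => r) (fun _ => s) (c • a) g =
      c • cohaMul A1 (fun _ => r) (fun _ => s) a g := by
  apply cohaMul_eq_of
  rw [smul_eq_C_mul, map_mul, (cohaMul_spec A1 ha hg).2]
  unfold cohaMulRat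
  rw [Finset.mul_sum]
  refine Finset.sum_congr rfl fun S _ => ?_
  rw [← mul_div_assoc, ← map_mul, map_smul, smul_eq_C_mul]
  congr 2
  ring

noncomputable def phiv (r : ℕ) (p : Fin 1 × ℕ) : Polynomial (PolyQ 1) :=
  if p.2 < r then Polynomial.C (X p) else if p.2 = r then Polynomial.X else 0

noncomputable def phiH (r : ℕ) : PolyQ 1 →ₐ[ℚ] Polynomial (PolyQ 1) := aeval (phiv r)

lemma phi_supp (r : ℕ) (h : PolyQ 1) : ∀ k,
    (phiH r h).coeff k ∈ supported ℚ {p : Fin 1 × ℕ | p.2 < r} := by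
  induction h using MvPolynomial.induction_on with
  | C a =>
    intro k
    have : phiH r (C a) = Polynomial.C (C a) := by
      unfold phiH; rw [aeval_C]; rfl
    rw [this, Polynomial.coeff_C]
    split_ifs
    · exact Subalgebra.algebraMap_mem _ a
    · exact zero_mem _
  | add p q hp hq => intro k; rw [map_add, Polynomial.coeff_add]; exact add_mem (hp k) (hq k)
  | mul_X p x hp =>
    intro k
    have : phiH r (X x) = phiv r x := by unfold phiH; rw [aeval_X]
    rw [map_mul, this]
    unfold phiv
    split_ifs with h1 h2
    · rw [Polynomial.coeff_mul_C]
      refine mul_mem (hp k) ?_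
      rw [X_mem_supported]; exact h1
    · cases k with
      | zero => rw [Polynomial.coeff_mul_X_zero]; exact zero_mem _
      | succ k => rw [Polynomial.coeff_mul_X]; exact hp k
    · rw [mul_zero, Polynomial.coeff_zero]; exact zero_mem _

lemma phi_mem {r : ℕ} {h : PolyQ 1} (hh : h ∈ Hspace (fun _ : Fin 1 => r + 1)) (k : ℕ) :
    (phiH r h).coeff k ∈ Hspace (fun _ : Fin 1 => r) := by
  refine ⟨?_, ?_⟩
  · have := phi_supp r h k
    rw [mem_supported] at this
    intro p hp
    exact this hp
  · intro v σ hσ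
    have hσ' : ∀ j, σ j ≠ j → j < r := hσ
    have hs := hh.2 v σ (fun j hj => Nat.lt_succ_of_lt (hσ' j hj))
    have hge : ∀ j, r ≤ j → σ j = j := by
      intro j hj
      by_contra hn
      have := hσ' j hn
      omega
    have hlt : ∀ j, j < r → σ j < r := by
      intro j hj
      by_contra hn
      have := σ.injective (hge (σ j) (by omega))
      omega
    have hcomp : (phiH r).comp (rename (vertexPerm v σ)) =
        (Polynomial.mapAlgHom (rename (vertexPerm v σ) : PolyQ 1 →ₐ[ℚ] PolyQ 1)).comp (phiH r) := by
      apply MvPolynomial.algHom_ext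
      rintro ⟨a, j⟩
      have hav : a = v := Subsingleton.elim _ _
      subst hav
      have hv : vertexPerm a σ (a, j) = (a, σ j) := by simp [vertexPerm]
      simp only [AlgHom.comp_apply, rename_X, hv]
      unfold phiH
      rw [aeval_X, aeval_X]
      unfold phiv
      simp only
      rcases lt_trichotomy j r with hj | hj | hj
      · rw [if_pos (hlt j hj), if_pos hj]
        simp [hv]
      · rw [hge j hj.ge, if_neg (by omega), if_pos hj]
        simp
      · rw [hge j hj.le, if_neg (by omega), if_neg (by omega)]
        simp
    have h3 := congrArg (fun F => (F h).coeff k) hcomp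
    simp only [AlgHom.comp_apply, hs] at h3
    rw [Polynomial.coe_mapAlgHom, Polynomial.coeff_map] at h3
    exact h3.symm

lemma phi_sum {r : ℕ} {h : PolyQ 1} (hh : h ∈ Hspace (fun _ : Fin 1 => r + 1)) {l : ℕ}
    {S : Fin 1 → Finset ℕ} (hl : l ∈ Finset.range (r + 1)) (hS : S 0 = (Finset.range (r + 1)).erase l) :
    ∑ k ∈ Finset.range ((phiH r h).natDegree + 1),
      substAlong S ((phiH r h).coeff k) * X ((0 : Fin 1), l) ^ k = h := by
  have h1 : ∑ k ∈ Finset.range ((phiH r h).natDegree + 1),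
      substAlong S ((phiH r h).coeff k) * X ((0 : Fin 1), l) ^ k =
      Polynomial.eval₂ (substAlong S : PolyQ 1 →+* PolyQ 1) (X ((0 : Fin 1), l)) (phiH r h) := by
    rw [Polynomial.eval₂_eq_sum_range]
    rfl
  rw [h1]
  let e : Fin 1 → ℕ → ℕ := fun _ j => if j < r then srt S 0 j else l
  let Psi : PolyQ 1 →+* PolyQ 1 :=
    (Polynomial.eval₂RingHom (substAlong S : PolyQ 1 →+* PolyQ 1) (X ((0 : Fin 1), l))).comp
      (phiH r : PolyQ 1 →+* Polynomial (PolyQ 1))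
  have h2 : Psi h = rename (mapE e) h := by
    refine hom_congr_vars (f₁ := Psi) (f₂ := ((rename (mapE e) : PolyQ 1 →ₐ[ℚ] PolyQ 1) : PolyQ 1 →+* PolyQ 1)) ?_ ?_ rfl
    · exact RingHom.ext_rat _ _
    · rintro ⟨a, j⟩ hp _
      have ha : a = 0 := Subsingleton.elim _ _
      subst ha
      have hj : j < r + 1 := hh.1 _ hp
      have e1 : Psi (X ((0 : Fin 1), j)) =
        Polynomial.eval₂ (substAlong S : PolyQ 1 →+* PolyQ 1) (X ((0 : Fin 1), l)) (phiv r (0, j)) := by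
        simp [Psi, phiH]
      rw [e1]
      simp only [RingHom.coe_coe, rename_X, mapE, e, phiv]
      split_ifs with h3 h4
      · rw [Polynomial.eval₂_C, RingHom.coe_coe, substAlong_eq, rename_X]
        rfl
      · rw [Polynomial.eval₂_X]
      · omega
  have hcard : (S 0).card = r := by
    rw [hS, Finset.card_erase_of_mem hl, Finset.card_range]; omega
  have hb := srt_bij S 0
  rw [hcard] at hb
  have hbij : ∀ v, Set.BijOn (e v) (Set.Iio (r + 1)) ((Finset.range (r + 1) : Finset ℕ) : Set ℕ) := by
    intro v
    have hins : (Set.Iio (r + 1) : Set ℕ) = insert r (Set.Iio r) := by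
      ext j; simp only [Set.mem_Iio, Set.mem_insert_iff]; omega
    have hins2 : ((Finset.range (r + 1) : Finset ℕ) : Set ℕ) = insert (e v r) (S 0 : Set ℕ) := by
      have : e v r = l := by simp [e]
      rw [this, hS, ← Finset.coe_insert, Finset.insert_erase hl]
    rw [hins, hins2]
    apply Set.BijOn.insert
    · refine hb.congr ?_
      intro j hj
      simp only [e]
      rw [if_pos (Set.mem_Iio.1 hj)]
    · have : e v r = l := by simp [e]
      rw [this, hS]
      simp
  have hid : ∀ v : Fin 1, Set.BijOn (fun j : ℕ => j) (Set.Iio (r + 1))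
      ((Finset.range (r + 1) : Finset ℕ) : Set ℕ) := by
    intro v
    rw [Finset.coe_range]
    exact Set.bijOn_id _
  have h4 := rename_eq_of_bij hh (e1 := e) (e2 := fun _ j => j) hbij hid
  have h5 : (mapE (fun _ j => j) : Fin 1 × ℕ → Fin 1 × ℕ) = id := by funext p; rfl
  rw [h5, rename_id_apply] at h4
  exact h2.trans h4

lemma lag {r : ℕ} : ∑ l ∈ Finset.range (r + 1),
    algebraMap (PolyQ 1) (FractionRing (PolyQ 1)) (X ((0 : Fin 1), l) ^ r) /
      algebraMap (PolyQ 1) (FractionRing (PolyQ 1))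
        (∏ j ∈ (Finset.range (r + 1)).erase l, (X ((0 : Fin 1), l) - X ((0 : Fin 1), j))) = 1 := by
  have hinj := FaithfulSMul.algebraMap_injective (PolyQ 1) (FractionRing (PolyQ 1))
  have h := Lagrange.coeff_eq_sum (s := Finset.range (r + 1))
    (v := fun l => algebraMap (PolyQ 1) (FractionRing (PolyQ 1)) (X ((0 : Fin 1), l)))
    (P := Polynomial.X ^ r) (by
      intro a _ b _ hab
      have h1 := hinj hab
      have h2 := X_injective h1
      simpa using h2) (by
      rw [Polynomial.degree_X_pow, Finset.card_range]
      exact_mod_cast Nat.lt_succ_self r)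
  rw [Finset.card_range, Nat.add_sub_cancel, Polynomial.coeff_X_pow_self] at h
  rw [h]
  refine Finset.sum_congr rfl fun l _ => ?_
  simp only [map_prod, map_sub, map_pow, Polynomial.eval_pow, Polynomial.eval_X]

lemma rat_one {r : ℕ} (g f : PolyQ 1) :
    cohaMulRat A1 (fun _ => r) (fun _ => 1) g f = ∑ l ∈ Finset.range (r + 1),
      algebraMap (PolyQ 1) (FractionRing (PolyQ 1))
        (substAlong (fun _ => (Finset.range (r + 1)).erase l) g * substAlong (fun _ => {l}) f) /
      algebraMap (PolyQ 1) (FractionRing (PolyQ 1))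
        (∏ j ∈ (Finset.range (r + 1)).erase l, (X ((0 : Fin 1), l) - X ((0 : Fin 1), j))) := by
  unfold cohaMulRat
  symm
  refine Finset.sum_bij (fun l _ => fun _ => (Finset.range (r + 1)).erase l) ?_ ?_ ?_ ?_
  · intro l hl
    rw [mem_shuffles]
    intro v
    refine ⟨Finset.erase_subset _ _, ?_⟩
    rw [Finset.card_erase_of_mem hl, Finset.card_range]; omega
  · intro a ha b hb h
    have h1 := congrFun h 0
    by_contra hn
    have : a ∈ (Finset.range (r + 1)).erase b := Finset.mem_erase.2 ⟨hn, ha⟩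
    rw [← h1] at this
    simp at this
  · intro S hS
    have hc := card_compl hS 0
    obtain ⟨l, hl⟩ := Finset.card_eq_one.1 hc
    have hlm : l ∈ shuffleCompl (fun _ => r) (fun _ => 1) S 0 := by rw [hl]; simp
    refine ⟨l, (Finset.mem_sdiff.1 hlm).1, ?_⟩
    funext v
    rw [Subsingleton.elim v 0]
    have hsub := (mem_shuffles.1 hS 0).1
    rw [← Finset.sdiff_sdiff_eq_self hsub]
    change (Finset.range (r + 1)).erase l =
      Finset.range (r + 1) \ shuffleCompl (fun _ => r) (fun _ => 1) S 0
    rw [hl, Finset.sdiff_singleton_eq_erase]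
  · intro l hl
    have hcompl : shuffleCompl (fun _ : Fin 1 => r) (fun _ => 1)
        (fun _ => (Finset.range (r + 1)).erase l) = fun _ => {l} := by
      funext v
      unfold shuffleCompl
      ext j
      simp only [Finset.mem_sdiff, Finset.mem_erase, Finset.mem_singleton]
      constructor
      · rintro ⟨h1, h2⟩
        by_contra hn
        exact h2 ⟨hn, h1⟩
      · rintro rfl
        exact ⟨hl, fun h => h.1 rfl⟩
    have hnum : interactionNum A1 (fun _ => r) (fun _ => 1)
        (fun _ => (Finset.range (r + 1)).erase l) = 1 := by
      unfold interactionNum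
      apply Finset.prod_eq_one
      intro a
      exact Empty.elim a
    unfold interactionDen
    rw [hcompl, hnum, mul_one, Fin.prod_univ_one, Finset.prod_singleton]

theorem H_decomp {r : ℕ} {h : PolyQ 1} (hh : h ∈ Hspace (fun _ : Fin 1 => r + 1)) :
    h = ∑ k ∈ Finset.range ((phiH r h).natDegree + 1),
      cohaMul A1 (fun _ => r) (fun _ => 1) ((phiH r h).coeff k) (X ((0 : Fin 1), 0) ^ (k + r)) := by
  apply FaithfulSMul.algebraMap_injective (PolyQ 1) (FractionRing (PolyQ 1))
  rw [map_sum]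
  rw [Finset.sum_congr rfl fun k _ => (cohaMul_spec A1 (phi_mem hh k) (X_pow_mem (k + r))).2]
  simp only [rat_one]
  rw [Finset.sum_comm]
  have hterm : ∀ l ∈ Finset.range (r + 1), ∑ k ∈ Finset.range ((phiH r h).natDegree + 1),
      algebraMap (PolyQ 1) (FractionRing (PolyQ 1))
        (substAlong (fun _ => (Finset.range (r + 1)).erase l) ((phiH r h).coeff k) *
          substAlong (fun _ => {l}) (X ((0 : Fin 1), 0) ^ (k + r))) /
      algebraMap (PolyQ 1) (FractionRing (PolyQ 1))
        (∏ j ∈ (Finset.range (r + 1)).erase l, (X ((0 : Fin 1), l) - X ((0 : Fin 1), j))) =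
      algebraMap (PolyQ 1) (FractionRing (PolyQ 1)) h *
      (algebraMap (PolyQ 1) (FractionRing (PolyQ 1)) (X ((0 : Fin 1), l) ^ r) /
      algebraMap (PolyQ 1) (FractionRing (PolyQ 1))
        (∏ j ∈ (Finset.range (r + 1)).erase l, (X ((0 : Fin 1), l) - X ((0 : Fin 1), j)))) := by
    intro l hl
    rw [← Finset.sum_div, ← map_sum, ← mul_div_assoc, ← map_mul]
    congr 2
    conv_rhs => rw [← phi_sum hh (S := fun _ => (Finset.range (r + 1)).erase l) hl rfl]
    rw [Finset.sum_mul]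
    refine Finset.sum_congr rfl fun k _ => ?_
    have : substAlong (fun _ => {l}) (X ((0 : Fin 1), 0) ^ (k + r)) =
        (X ((0 : Fin 1), l) ^ (k + r) : PolyQ 1) := by
      rw [map_pow]
      simp [substAlong]
    rw [this, pow_add]
    ring
  rw [Finset.sum_congr rfl hterm, ← Finset.mul_sum, lag, mul_one]

noncomputable def WA (r : ℕ) : Submodule ℚ (PolyQ 1) :=
  Submodule.span ℚ (Set.range fun f : Fin r → Polynomial ℚ => pA r f)

lemma WA_le (r : ℕ) : WA r ≤ Hspace (fun _ : Fin 1 => r) := by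
  unfold WA
  rw [Submodule.span_le]
  rintro _ ⟨f, rfl⟩
  exact pA_mem r f

lemma WA_mul {r : ℕ} (hr : 0 < r) (q : Polynomial ℚ) (g : PolyQ 1) (hg : g ∈ WA r) :
    cohaMul A1 (fun _ => r) (fun _ => 1) g (Polynomial.aeval (X ((0 : Fin 1), 0) : PolyQ 1) q)
      ∈ WA (r + 1) := by
  unfold WA at hg
  induction hg using Submodule.span_induction with
  | mem x hx =>
    obtain ⟨f, rfl⟩ := hx
    apply Submodule.subset_span
    refine ⟨Fin.snoc f q, ?_⟩
    simp only
    rw [pA_succ hr]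
    simp
  | zero =>
    have : cohaMul A1 (fun _ => r) (fun _ => 1) 0
        (Polynomial.aeval (X ((0 : Fin 1), 0) : PolyQ 1) q) = 0 := by
      have := coha_smul (r := r) 0 (zero_mem _) (aeval_mem q)
      rwa [zero_smul, zero_smul] at this
    rw [this]
    exact zero_mem _
  | add x y hx hy ihx ihy =>
    rw [coha_add (WA_le r hx) (WA_le r hy) (aeval_mem q)]
    exact add_mem ihx ihy
  | smul c x hx ihx =>
    rw [coha_smul c (WA_le r hx) (aeval_mem q)]
    exact Submodule.smul_mem _ _ ihx

theorem WA_eq (r : ℕ) : WA r = Hspace (fun _ : Fin 1 => r) := by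
  apply le_antisymm (WA_le r)
  induction r with
  | zero =>
    intro h hh
    have hv : h.vars = ∅ := by
      rw [Finset.eq_empty_iff_forall_notMem]
      intro p hp
      exact absurd (hh.1 p hp) (Nat.not_lt_zero _)
    have hs : h ∈ supported ℚ (∅ : Set (Fin 1 × ℕ)) := by
      rw [mem_supported, hv]; simp
    rw [supported_empty, Algebra.mem_bot] at hs
    obtain ⟨c, rfl⟩ := hs
    rw [Algebra.algebraMap_eq_smul_one]
    apply Submodule.smul_mem
    apply Submodule.subset_span
    exact ⟨fun u => u.elim0, pA_zero _⟩
  | succ r ih =>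
    intro h hh
    rcases Nat.eq_zero_or_pos r with rfl | hr
    · apply Submodule.subset_span
      refine ⟨fun _ => aeval (fun _ => Polynomial.X) h, ?_⟩
      simp only
      rw [pA_one]
      have h1 : Polynomial.aeval (X ((0 : Fin 1), 0) : PolyQ 1)
          (aeval (fun _ : Fin 1 × ℕ => (Polynomial.X : Polynomial ℚ)) h) =
          rename (mapE fun _ _ => 0) h := by
        rw [rename_eq_aeval, ← AlgHom.comp_apply]
        congr 1
        apply MvPolynomial.algHom_ext
        rintro ⟨a, j⟩
        rw [Subsingleton.elim a 0]
        simp [mapE]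
      rw [h1]
      conv_rhs => rw [← rename_id_apply h]
      apply rename_congr_vars
      rintro ⟨a, j⟩ hp
      have : j < 0 + 1 := hh.1 _ hp
      have hj : j = 0 := by omega
      rw [hj]; rfl
    · rw [H_decomp hh]
      refine sum_mem fun k _ => ?_
      have := WA_mul hr (Polynomial.X ^ (k + r)) _ (ih (phi_mem hh k))
      simpa using this

/-- Let `Q'` be a full connected Dynkin subquiver of the acyclic
quiver `Q`, `β` a positive root of `Q'`, and `i` a vertex with `β i = 1`.  The `r`-fold
left-to-right CoHA product of elements `f_u(ω_{i,1}) ∈ ℋ_β` depends only on the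
variables `ω_{i,1},…,ω_{i,r}` and equals the `ℋ(A₁)`-product `f₁(x₁) * ⋯ * f_r(x₁)`
under the substitution `x_b ↦ ω_{i,b}`.  Consequently the subalgebra `𝒜_β` generated
under `*` by `{f(ω_{i,1})} ⊆ ℋ_β` is isomorphic as an algebra to `ℋ(A₁)`: the
substitution is injective, intertwines the products on graded pieces, and carries
`ℋ_r(A₁)` onto the span of the `r`-fold products of generators. -/
theorem coha_pos_root_eq_A1 {n : ℕ} (Q : FinQuiver n) (hQ : Q.Acyclic)
    (Q' : Subquiver Q) (hD : Q'.IsDynkin)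
    (β : Fin n → ℕ) (hβ : Q'.IsPosRoot β) (i : Fin n) (hi : β i = 1) :
    (∀ (r : ℕ) (f : Fin r → Polynomial ℚ),
      (∀ p ∈ (cohaProdFin Q (fun _ => β)
          (fun u => Polynomial.aeval (X (i, 0) : PolyQ n) (f u))).vars,
          p.1 = i ∧ p.2 < r) ∧
      cohaProdFin Q (fun _ => β)
          (fun u => Polynomial.aeval (X (i, 0) : PolyQ n) (f u)) =
        rename (fun p : Fin 1 × ℕ => (i, p.2))
          (cohaProdFin A1 (fun _ => oneDim)
            (fun u => Polynomial.aeval (X ((0 : Fin 1), 0) : PolyQ 1) (f u)))) ∧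
    Function.Injective (rename (fun p : Fin 1 × ℕ => (i, p.2)) : PolyQ 1 → PolyQ n) ∧
    (∀ (r s : ℕ) (g₁ g₂ : PolyQ 1), g₁ ∈ Hspace (fun _ => r) → g₂ ∈ Hspace (fun _ => s) →
      rename (fun p : Fin 1 × ℕ => (i, p.2)) (cohaMul A1 (fun _ => r) (fun _ => s) g₁ g₂) =
        cohaMul Q (fun v => r * β v) (fun v => s * β v)
          (rename (fun p : Fin 1 × ℕ => (i, p.2)) g₁)
          (rename (fun p : Fin 1 × ℕ => (i, p.2)) g₂)) ∧
    (∀ r : ℕ,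
      Submodule.map
          (rename (fun p : Fin 1 × ℕ => (i, p.2)) : PolyQ 1 →ₐ[ℚ] PolyQ n).toLinearMap
          (Hspace (fun _ => r)) =
        Submodule.span ℚ {g : PolyQ n | ∃ f : Fin r → Polynomial ℚ,
          g = cohaProdFin Q (fun _ => β)
            (fun u => Polynomial.aeval (X (i, 0) : PolyQ n) (f u))}) := by
  have hF := hD.2.1
  have h1 : chiQ Q (fun v => (β v : ℤ)) (fun v => (β v : ℤ)) = 1 := by
    rw [← eulerZ_eq_chiQ Q' hF _ (fun v hv => by rw [hβ.1 v hv]; rfl)]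
    exact hβ.2.2
  have h2 : ∀ α : Fin n → ℤ, (∀ v, β v = 0 → α v = 0) → α ≠ 0 → 0 < chiQ Q α α := by
    intro α ha hne
    have hs : ∀ v, v ∉ Q'.verts → α v = 0 := fun v hv => ha v (hβ.1 v hv)
    rw [← eulerZ_eq_chiQ Q' hF _ hs]
    exact hD.2.2 α hs hne
  refine ⟨fun r f => ⟨?_, prod_eq_pA Q hi h1 h2 r f⟩, iot_inj i, ?_, ?_⟩
  · rw [prod_eq_pA Q hi h1 h2 r f]
    intro p hp
    have hp' := MvPolynomial.vars_rename _ _ hp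
    obtain ⟨q, hq, rfl⟩ := Finset.mem_image.1 hp'
    exact ⟨rfl, (pA_mem r f).1 q hq⟩
  · intro r s g₁ g₂ hg₁ hg₂
    exact mul_eq Q hi h1 h2 hg₁ hg₂
  · intro r
    rw [← WA_eq, WA, Submodule.map_span]
    congr 1
    ext g
    constructor
    · rintro ⟨_, ⟨f, rfl⟩, rfl⟩
      exact ⟨f, (prod_eq_pA Q hi h1 h2 r f).symm⟩
    · rintro ⟨f, rfl⟩
      exact ⟨_, ⟨f, rfl⟩, (prod_eq_pA Q hi h1 h2 r f).symm⟩
end
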